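/- Uniform law of large numbers for Betti numbers: fix integers 0 ≤ q < d. Let P be a stationary and ergodic probability measure on Ω = [0,1]^{K^d} such that the marginal distribution function F^Q(t) = P(ω_Q ≤ t) is continuous in t ∈ [0,1] for every Q ∈ K^d, and let β̂_q(t) := limsup_{n→∞} |Λ_n|^{−1} E[β_q^n(t)]. Then sup_{t∈[0,1]} | |Λ_n|^{−1} β_q^n(t) − β̂_q(t) | → 0 as n → ∞, P-almost surely. -/

import Mathlib

open MeasureTheory Filter Topology

noncomputable section

/-- An elementary cube in `ℝ^d`: the `i`-th component is the elementary interval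
`[l, l+1]` if the Boolean is `true` (nondegenerate) and `[l, l]` if `false` (degenerate). -/
abbrev ElemCube (d : ℕ) := Fin d → ℤ × Bool

/-- The dimension of an elementary cube: the number of nondegenerate components. -/
def cubeDim {d : ℕ} (Q : ElemCube d) : ℕ :=
  (Finset.univ.filter fun i => (Q i).2 = true).card

/-- The geometric realization of an elementary cube as a subset of `ℝ^d`. -/
def cubeSet {d : ℕ} (Q : ElemCube d) : Set (Fin d → ℝ) :=
  {x | ∀ i, x i ∈ Set.Icc ((Q i).1 : ℝ) ((Q i).1 + (if (Q i).2 then 1 else 0))}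

/-- A cubical set is a union of elementary cubes. -/
def IsCubical {d : ℕ} (X : Set (Fin d → ℝ)) : Prop :=
  ∃ S : Set (ElemCube d), X = ⋃ Q ∈ S, cubeSet Q

/-- The free `ℤ`-module generated by all elementary cubes of `ℝ^d` (all dimensions mixed). -/
abbrev CubChain (d : ℕ) := ElemCube d →₀ ℤ

/-- The cubical boundary of a single elementary cube, defined by induction on the ambient
dimension, following the inductive definition: in `ℝ¹`, `∂ [l,l+1]^ = [l+1]^ - [l]^` and
`∂ Q̂ = 0` for degenerate `Q`; and for `Q = I × P`,
`∂ Q̂ = (∂ Î) ⋄ P̂ + (-1)^(dim I) Î ⋄ (∂ P̂)`, where `⋄` is the cubical product. -/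
def boundaryCube : (d : ℕ) → ElemCube d → CubChain d
  | 0, _ => 0
  | d + 1, Q =>
      (if (Q 0).2 then
          Finsupp.single (Fin.cons ((Q 0).1 + 1, false) (fun i => Q i.succ)) (1 : ℤ)
            - Finsupp.single (Fin.cons ((Q 0).1, false) (fun i => Q i.succ)) (1 : ℤ)
        else 0)
      + (if (Q 0).2 then (-1 : ℤ) else 1) •
          (boundaryCube d (fun i => Q i.succ)).sum
            (fun R n => Finsupp.single (Fin.cons (Q 0) R) n)

/-- The cubical boundary operator, the `ℤ`-linear extension of `boundaryCube`. -/
def boundaryHom (d : ℕ) : CubChain d →ₗ[ℤ] CubChain d :=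
  Finsupp.lsum ℤ fun Q => LinearMap.toSpanSingleton ℤ (CubChain d) (boundaryCube d Q)

/-- `C_k^d(X)`: the submodule of chains supported on the `k`-dimensional elementary cubes
contained in `X`. -/
def chainsOn (d k : ℕ) (X : Set (Fin d → ℝ)) : Submodule ℤ (CubChain d) :=
  Finsupp.supported ℤ ℤ {Q : ElemCube d | cubeDim Q = k ∧ cubeSet Q ⊆ X}

/-- `Z_q(X) = ker ∂_q^X`, the cycles of the cubical set `X` in degree `q`. -/
def cycleMod (d q : ℕ) (X : Set (Fin d → ℝ)) : Submodule ℤ (CubChain d) :=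
  chainsOn d q X ⊓ LinearMap.ker (boundaryHom d)

/-- `B_q(X) = im ∂_{q+1}^X`, the boundaries of the cubical set `X` in degree `q`. -/
def boundaryMod (d q : ℕ) (X : Set (Fin d → ℝ)) : Submodule ℤ (CubChain d) :=
  Submodule.map (boundaryHom d) (chainsOn d (q + 1) X)

/-- The `q`-th Betti number of a cubical set: the rank of the free part of the `q`-th
cubical homology `H_q(X) = Z_q(X) / B_q(X)`. -/
def betti (d q : ℕ) (X : Set (Fin d → ℝ)) : ℕ :=
  Module.finrank ℤ
    (↥(cycleMod d q X) ⧸ (boundaryMod d q X).comap (cycleMod d q X).subtype)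

/-- `Λ_n = [-n, n]^d ⊆ ℝ^d`. -/
def lambda (d n : ℕ) : Set (Fin d → ℝ) := {x | ∀ i, x i ∈ Set.Icc (-(n : ℝ)) n}

/-- The configuration space `Ω = [0,1]^{K^d}` with the product σ-field. -/
abbrev Config (d : ℕ) := ElemCube d → unitInterval

/-- Translation of an elementary cube by `x ∈ ℤ^d`. -/
def translateCube {d : ℕ} (x : Fin d → ℤ) (Q : ElemCube d) : ElemCube d :=
  fun i => ((Q i).1 + x i, (Q i).2)

/-- The translation action `τ_x` on configurations: `(τ_x ω)_Q = ω_{-x+Q}`. -/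
def configShift {d : ℕ} (x : Fin d → ℤ) (ω : Config d) : Config d :=
  fun Q => ω (translateCube (-x) Q)

/-- Stationarity of a measure on configuration space: `P(τ_x⁻¹ A) = P(A)`. -/
def Stationary {d : ℕ} (P : Measure (Config d)) : Prop :=
  ∀ (x : Fin d → ℤ) (A : Set (Config d)), MeasurableSet A → P (configShift x ⁻¹' A) = P A

/-- Ergodicity of a measure on configuration space under translations. -/
def ErgodicConfig {d : ℕ} (P : Measure (Config d)) : Prop :=
  ∀ A : Set (Config d), MeasurableSet A →
    (∀ x : Fin d → ℤ, configShift x ⁻¹' A = A) → P A = 0 ∨ P A = 1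

/-- The random cubical set `X(t) = ⋃ {Q ∈ K^d : ω_Q ≤ t}`. -/
def cubSet {d : ℕ} (ω : Config d) (t : ℝ) : Set (Fin d → ℝ) :=
  ⋃ Q ∈ {Q : ElemCube d | (ω Q : ℝ) ≤ t}, cubeSet Q

/-- `β_q^n(t)(ω) = β_q(X(t) ∩ Λ_n)`. -/
def bettiN (d q n : ℕ) (t : ℝ) (ω : Config d) : ℕ :=
  betti d q (cubSet ω t ∩ lambda d n)

/-- `β̂_q(t) := limsup_{n → ∞} |Λ_n|⁻¹ E[β_q^n(t)]`, where `|Λ_n| = (2n)^d`. -/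
def betaHat (d q : ℕ) (P : Measure (Config d)) (t : ℝ) : ℝ :=
  limsup (fun n : ℕ => ((2 * (n : ℝ)) ^ d)⁻¹ * ∫ ω, (bettiN d q n t ω : ℝ) ∂P) atTop

lemma bdd_above_of_abs {u : ℕ → ℝ} {C : ℝ} (hu : ∀ n, |u n| ≤ C) :
    IsBoundedUnder (· ≤ ·) atTop u :=
  isBoundedUnder_of ⟨C, fun n => (abs_le.1 (hu n)).2⟩

lemma bdd_below_of_abs {u : ℕ → ℝ} {C : ℝ} (hu : ∀ n, |u n| ≤ C) :
    IsBoundedUnder (· ≥ ·) atTop u :=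
  isBoundedUnder_of ⟨-C, fun n => (abs_le.1 (hu n)).1⟩

lemma limsup_le_of_sub_tendsto {u v : ℕ → ℝ} {C : ℝ} (hu : ∀ n, |u n| ≤ C)
    (hv : ∀ n, |v n| ≤ C) (h : Tendsto (fun n => u n - v n) atTop (𝓝 0)) :
    limsup u atTop ≤ limsup v atTop := by
  refine le_of_forall_pos_le_add fun ε hε => ?_
  have h1 : ∀ᶠ n in atTop, v n < limsup v atTop + ε / 2 :=
    eventually_lt_of_limsup_lt (by linarith) (bdd_above_of_abs hv)
  have h2 : ∀ᶠ n in atTop, u n - v n < ε / 2 := h.eventually_lt_const (by positivity)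
  refine limsup_le_of_le ((bdd_below_of_abs hu).isCoboundedUnder_flip) ?_
  filter_upwards [h1, h2] with n a b
  linarith

lemma limsup_eq_of_sub_tendsto {u v : ℕ → ℝ} {C : ℝ} (hu : ∀ n, |u n| ≤ C)
    (hv : ∀ n, |v n| ≤ C) (h : Tendsto (fun n => u n - v n) atTop (𝓝 0)) :
    limsup u atTop = limsup v atTop := by
  refine le_antisymm (limsup_le_of_sub_tendsto hu hv h) (limsup_le_of_sub_tendsto hv hu ?_)
  simpa using h.neg

section Birk
variable {Ω : Type*} [MeasurableSpace Ω] {P : Measure Ω} [IsProbabilityMeasure P]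

lemma integrable_of_bdd {f : Ω → ℝ} (hf : Measurable f) {C : ℝ} (hC : ∀ ω, |f ω| ≤ C) :
    Integrable f P :=
  Integrable.of_bound hf.aestronglyMeasurable C (ae_of_all _ hC)

/-- Garsia's maximal function. -/
def bmax (T : Ω → Ω) (f : Ω → ℝ) : ℕ → Ω → ℝ
  | 0, _ => 0
  | N + 1, ω => max 0 (f ω + bmax T f N (T ω))

lemma bmax_nonneg (T : Ω → Ω) (f : Ω → ℝ) (N : ℕ) (ω : Ω) : 0 ≤ bmax T f N ω := by
  cases N <;> simp [bmax]

lemma bmax_mono (T : Ω → Ω) (f : Ω → ℝ) (N : ℕ) (ω : Ω) :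
    bmax T f N ω ≤ bmax T f (N + 1) ω := by
  induction N generalizing ω with
  | zero => exact bmax_nonneg _ _ _ _
  | succ N ih =>
    rw [bmax, bmax]
    have := ih (T ω)
    gcongr

lemma bmax_measurable {T : Ω → Ω} (hT : Measurable T) {f : Ω → ℝ} (hf : Measurable f) (N : ℕ) :
    Measurable (bmax T f N) := by
  induction N with
  | zero => exact measurable_const
  | succ N ih => exact measurable_const.max (hf.add (ih.comp hT))

lemma bmax_le {T : Ω → Ω} {f : Ω → ℝ} {C : ℝ} (hC : ∀ ω, |f ω| ≤ C) (N : ℕ) (ω : Ω) :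
    |bmax T f N ω| ≤ N * C := by
  rw [abs_of_nonneg (bmax_nonneg _ _ _ _)]
  induction N generalizing ω with
  | zero => simp [bmax]
  | succ N ih =>
    have h0 : 0 ≤ C := (abs_nonneg _).trans (hC ω)
    rw [bmax]
    apply max_le
    · positivity
    · push_cast
      have := ih (T ω)
      have := (abs_le.1 (hC ω)).2
      linarith

lemma birkhoffSum_le_bmax (T : Ω → Ω) (f : Ω → ℝ) (N : ℕ) (ω : Ω) :
    birkhoffSum T f N ω ≤ bmax T f N ω := by
  induction N generalizing ω with
  | zero => simp [bmax]
  | succ N ih =>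
    rw [birkhoffSum_succ', bmax]
    exact le_max_of_le_right (by linarith [ih (T ω)])

lemma garsia {T : Ω → Ω} (hT : MeasurePreserving T P P) {f : Ω → ℝ} (hf : Measurable f)
    {C : ℝ} (hC : ∀ ω, |f ω| ≤ C) (N : ℕ) :
    0 ≤ ∫ ω in {ω | 0 < bmax T f (N + 1) ω}, f ω ∂P := by
  have hm := fun N => bmax_measurable hT.measurable hf N
  have hi : ∀ N, Integrable (bmax T f N) P := fun N => integrable_of_bdd (hm N) (bmax_le hC N)
  have hi' : Integrable (fun ω => bmax T f N (T ω)) P :=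
    integrable_of_bdd ((hm N).comp hT.measurable) (fun ω => bmax_le hC N (T ω))
  have hE : MeasurableSet {ω | 0 < bmax T f (N + 1) ω} :=
    measurableSet_lt measurable_const (hm _)
  have h1 : ∫ ω, bmax T f N (T ω) ∂P = ∫ ω, bmax T f N ω ∂P := by
    rw [← integral_map hT.measurable.aemeasurable, hT.map_eq]
    rw [hT.map_eq]; exact (hm N).aestronglyMeasurable
  have h2 : ∫ ω, (bmax T f (N + 1) ω - bmax T f N (T ω)) ∂P ≤
      ∫ ω, Set.indicator {ω | 0 < bmax T f (N + 1) ω} f ω ∂P := by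
    apply integral_mono ((hi _).sub hi') ((integrable_of_bdd hf hC).indicator hE)
    intro ω
    by_cases h : 0 < bmax T f (N + 1) ω
    · rw [Set.indicator_of_mem (by exact h)]
      have h3 : bmax T f (N + 1) ω = f ω + bmax T f N (T ω) := by
        rw [bmax] at h ⊢
        rcases lt_max_iff.1 h with h | h
        · exact absurd h (lt_irrefl _)
        · exact max_eq_right h.le
      simp only [Pi.sub_apply]; linarith
    · rw [Set.indicator_of_notMem (by exact h)]
      have := bmax_nonneg T f N (T ω)
      simp only [Pi.sub_apply]; linarith
  rw [integral_indicator hE, integral_sub (hi _) hi', h1] at h2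
  have h3 : ∫ ω, bmax T f N ω ∂P ≤ ∫ ω, bmax T f (N + 1) ω ∂P :=
    integral_mono (hi _) (hi _) (bmax_mono T f N)
  linarith

lemma max_erg {T : Ω → Ω} (hT : MeasurePreserving T P P) {g : Ω → ℝ} (hg : Measurable g)
    {C : ℝ} (hC : ∀ ω, |g ω| ≤ C) {E : Set Ω} (hE : MeasurableSet E) (hTE : T ⁻¹' E = E)
    (hpos : ∀ ω ∈ E, ∃ k, 0 < birkhoffSum T g k ω) :
    0 ≤ ∫ ω in E, g ω ∂P := by
  set f := E.indicator g with hfdef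
  have hf : Measurable f := hg.indicator hE
  have hfC : ∀ ω, |f ω| ≤ C := fun ω => by
    by_cases h : ω ∈ E
    · simpa [hfdef, h] using hC ω
    · simpa [hfdef, h] using (abs_nonneg _).trans (hC ω)
  have hTE' : ∀ ω, T ω ∈ E ↔ ω ∈ E := fun ω => by
    rw [← Set.mem_preimage, hTE]
  have hsum : ∀ k, ∀ ω ∈ E, birkhoffSum T f k ω = birkhoffSum T g k ω := by
    intro k
    induction k with
    | zero => simp
    | succ k ih =>
      intro ω hω
      rw [birkhoffSum_succ', birkhoffSum_succ', ih _ ((hTE' ω).2 hω)]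
      simp [hfdef, hω]
  have hzero : ∀ k, ∀ ω ∉ E, bmax T f k ω = 0 := by
    intro k
    induction k with
    | zero => simp [bmax]
    | succ k ih =>
      intro ω hω
      rw [bmax, ih _ (fun h => hω ((hTE' ω).1 h))]
      simp [hfdef, hω]
  have key : ∀ N, 0 ≤ ∫ ω, Set.indicator {ω | 0 < bmax T f (N + 1) ω} f ω ∂P := fun N => by
    rw [integral_indicator (measurableSet_lt measurable_const
      (bmax_measurable hT.measurable hf _))]
    exact garsia hT hf hfC N
  have lim : Tendsto (fun N => ∫ ω, Set.indicator {ω | 0 < bmax T f (N + 1) ω} f ω ∂P) atTop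
      (𝓝 (∫ ω, f ω ∂P)) := by
    refine tendsto_integral_of_dominated_convergence (fun _ => C) (fun N => ?_)
      (integrable_const C) (fun N => ae_of_all _ fun ω => ?_) (ae_of_all _ fun ω => ?_)
    · exact (hf.indicator (measurableSet_lt measurable_const
        (bmax_measurable hT.measurable hf _))).aestronglyMeasurable
    · rw [Real.norm_eq_abs]
      by_cases h : 0 < bmax T f (N + 1) ω
      · rw [Set.indicator_of_mem (by exact h)]; exact hfC ω
      · rw [Set.indicator_of_notMem (by exact h)]; simpa using (abs_nonneg _).trans (hC ω)
    · by_cases hω : ω ∈ E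
      · obtain ⟨k, hk⟩ := hpos ω hω
        rw [← hsum k ω hω] at hk
        have hk' := hk.trans_le (birkhoffSum_le_bmax T f k ω)
        refine tendsto_const_nhds.congr' ?_
        filter_upwards [eventually_ge_atTop k] with N hN
        rw [Set.indicator_of_mem]
        exact hk'.trans_le (monotone_nat_of_le_succ (fun n => bmax_mono T f n ω)
          (hN.trans (Nat.le_succ N)))
      · have : f ω = 0 := by simp [hfdef, hω]
        simp [this, Set.indicator]
  have := ge_of_tendsto' lim key
  rwa [hfdef, integral_indicator hE] at this

lemma abs_birkhoffAverage_le {T : Ω → Ω} {f : Ω → ℝ} {C : ℝ} (hC : ∀ ω, |f ω| ≤ C)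
    (n : ℕ) (ω : Ω) : |birkhoffAverage ℝ T f n ω| ≤ C := by
  have h0 : 0 ≤ C := (abs_nonneg _).trans (hC ω)
  rw [birkhoffAverage, smul_eq_mul, abs_mul, abs_inv, Nat.abs_cast, birkhoffSum]
  rcases Nat.eq_zero_or_pos n with rfl | hn
  · simpa
  have h1 : |∑ k ∈ Finset.range n, f (T^[k] ω)| ≤ n * C := by
    refine (Finset.abs_sum_le_sum_abs _ _).trans ?_
    refine (Finset.sum_le_card_nsmul _ _ C (fun k _ => hC _)).trans ?_
    simp
  have hn' : (0 : ℝ) < n := by exact_mod_cast hn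
  rw [inv_mul_le_iff₀ hn']
  exact h1

lemma measurable_birkhoffAverage {T : Ω → Ω} (hT : Measurable T) {f : Ω → ℝ}
    (hf : Measurable f) (n : ℕ) : Measurable (birkhoffAverage ℝ T f n) := by
  unfold birkhoffAverage birkhoffSum
  exact (Finset.measurable_fun_sum _ fun k _ => hf.comp (hT.iterate k)).const_mul ((n : ℝ)⁻¹)

lemma limsup_birk_inv {T : Ω → Ω} {f : Ω → ℝ} {C : ℝ} (hC : ∀ ω, |f ω| ≤ C) (ω : Ω) :
    limsup (fun n => birkhoffAverage ℝ T f n (T ω)) atTop =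
      limsup (fun n => birkhoffAverage ℝ T f n ω) atTop := by
  refine limsup_eq_of_sub_tendsto (abs_birkhoffAverage_le hC · _)
    (abs_birkhoffAverage_le hC · _) ?_
  apply tendsto_birkhoffAverage_apply_sub_birkhoffAverage'
  rw [Metric.isBounded_iff_subset_closedBall 0]
  refine ⟨C, ?_⟩
  rintro _ ⟨y, rfl⟩
  simpa using hC y

/-- One half of the upcrossing estimate. -/
lemma birk_half {T : Ω → Ω} (hT : MeasurePreserving T P P) {f : Ω → ℝ} (hf : Measurable f)
    {C : ℝ} (hC : ∀ ω, |f ω| ≤ C) {E : Set Ω} (hE : MeasurableSet E) (hTE : T ⁻¹' E = E)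
    (b : ℝ) (hb : ∀ ω ∈ E, b < limsup (fun n => birkhoffAverage ℝ T f n ω) atTop) :
    b * P.real E ≤ ∫ ω in E, f ω ∂P := by
  have h := max_erg hT (g := fun ω => f ω - b) (hf.sub_const b) (C := C + |b|)
    (fun ω => (abs_sub _ _).trans (by linarith [hC ω])) hE hTE ?_
  · rw [integral_sub (integrable_of_bdd hf hC).integrableOn (integrable_const b)] at h
    simp at h
    linarith
  · intro ω hω
    have h1 := frequently_lt_of_lt_limsup
      ((bdd_below_of_abs (abs_birkhoffAverage_le hC · ω)).isCoboundedUnder_flip) (hb ω hω)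
    obtain ⟨n, hn, hn0⟩ := (h1.and_eventually (eventually_gt_atTop 0)).exists
    refine ⟨n, ?_⟩
    have hn' : (0 : ℝ) < n := by exact_mod_cast hn0
    rw [birkhoffAverage, smul_eq_mul, lt_inv_mul_iff₀ hn'] at hn
    have : birkhoffSum T (fun ω => f ω - b) n ω = birkhoffSum T f n ω - n * b := by
      simp [birkhoffSum, Finset.sum_sub_distrib]
    rw [this]; linarith

theorem birkhoff_ae {T : Ω → Ω} (hT : MeasurePreserving T P P) {f : Ω → ℝ} (hf : Measurable f)
    {C : ℝ} (hC : ∀ ω, |f ω| ≤ C) :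
    ∀ᵐ ω ∂P, ∃ c, Tendsto (fun n => birkhoffAverage ℝ T f n ω) atTop (𝓝 c) := by
  have hCn : ∀ ω, |(-f) ω| ≤ C := fun ω => by simpa using hC ω
  have hneg : ∀ n ω, birkhoffAverage ℝ T (-f) n ω = - birkhoffAverage ℝ T f n ω := by
    intro n ω
    simp [birkhoffAverage, birkhoffSum]
  have key : ∀ a b : ℚ, a < b → ∀ᵐ ω ∂P,
      ¬ ((b : ℝ) < limsup (fun n => birkhoffAverage ℝ T f n ω) atTop ∧
        (-a : ℝ) < limsup (fun n => birkhoffAverage ℝ T (-f) n ω) atTop) := by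
    intro a b hab
    set E := {ω | (b : ℝ) < limsup (fun n => birkhoffAverage ℝ T f n ω) atTop ∧
        (-a : ℝ) < limsup (fun n => birkhoffAverage ℝ T (-f) n ω) atTop} with hEdef
    have hE : MeasurableSet E :=
      (measurableSet_lt measurable_const (Measurable.limsup
        (measurable_birkhoffAverage hT.measurable hf))).inter
      (measurableSet_lt measurable_const (Measurable.limsup
        (measurable_birkhoffAverage hT.measurable hf.neg)))
    have hTE : T ⁻¹' E = E := by
      ext ω
      simp only [hEdef, Set.mem_preimage, Set.mem_ofPred_eq]
      rw [limsup_birk_inv hC, limsup_birk_inv hCn]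
    have h1 := birk_half hT hf hC hE hTE b (fun ω h => h.1)
    have h2 := birk_half hT hf.neg hCn hE hTE (-a) (fun ω h => h.2)
    simp only [Pi.neg_apply, integral_neg] at h2
    have hab' : (a : ℝ) < b := by exact_mod_cast hab
    have h3 : P.real E = 0 := by
      have := measureReal_nonneg (μ := P) (s := E)
      by_contra hne
      have : 0 < P.real E := lt_of_le_of_ne this (Ne.symm hne)
      nlinarith
    rw [measureReal_eq_zero_iff] at h3
    exact measure_eq_zero_iff_ae_notMem.1 h3
  have key' := ae_all_iff.2 fun a : ℚ => ae_all_iff.2 fun b : ℚ => ae_all_iff.2 fun h : a < b =>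
    key a b h
  filter_upwards [key'] with ω hω
  refine tendsto_of_no_upcrossings (s := Set.range ((↑) : ℚ → ℝ)) Rat.denseRange_cast ?_
    (bdd_above_of_abs (abs_birkhoffAverage_le hC · ω))
    (bdd_below_of_abs (abs_birkhoffAverage_le hC · ω))
  rintro _ ⟨a, rfl⟩ _ ⟨b, rfl⟩ hab ⟨hfa, hfb⟩
  have hab' : a < b := by exact_mod_cast hab
  obtain ⟨a', ha1, ha2⟩ := exists_between hab'
  obtain ⟨b', hb1, hb2⟩ := exists_between ha2
  have : (a : ℝ) < a' := by exact_mod_cast ha1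
  have : (b' : ℝ) < b := by exact_mod_cast hb2
  refine hω a' b' hb1 ⟨?_, ?_⟩
  · refine lt_of_lt_of_le ‹(b' : ℝ) < b› ?_
    exact le_limsup_of_frequently_le (hfb.mono fun n h => h.le)
      (bdd_above_of_abs (abs_birkhoffAverage_le hC · ω))
  · refine lt_of_lt_of_le (neg_lt_neg ‹(a : ℝ) < a'›) ?_
    refine le_limsup_of_frequently_le (hfa.mono fun n h => ?_)
      (bdd_above_of_abs (abs_birkhoffAverage_le hCn · ω))
    rw [hneg]
    exact neg_le_neg h.le

end Birk

section Wiener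
variable {Ω : Type*} [MeasurableSpace Ω] {P : Measure Ω} [IsProbabilityMeasure P]

lemma tendsto_zero_of_limsup {u : ℕ → ℝ} {C : ℝ} (h0 : ∀ n, 0 ≤ u n) (hu : ∀ n, u n ≤ C)
    (h : limsup u atTop = 0) : Tendsto u atTop (𝓝 0) := by
  have hb : ∀ n, |u n| ≤ C := fun n => by rw [abs_of_nonneg (h0 n)]; exact hu n
  rw [Metric.tendsto_atTop']
  intro ε hε
  have h1 : ∀ᶠ n in atTop, u n < ε :=
    eventually_lt_of_limsup_lt (by rw [h]; exact hε) (bdd_above_of_abs hb)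
  obtain ⟨N, hN⟩ := eventually_atTop.1 h1
  refine ⟨N, fun n hn => ?_⟩
  rw [Real.dist_eq, sub_zero, abs_of_nonneg (h0 n)]
  exact hN n hn.le

lemma abs_limsup_le {u : ℕ → ℝ} {C : ℝ} (hu : ∀ n, |u n| ≤ C) : |limsup u atTop| ≤ C := by
  rw [abs_le]
  constructor
  · exact le_limsup_of_frequently_le
      (Frequently.of_forall fun n => (abs_le.1 (hu n)).1) (bdd_above_of_abs hu)
  · exact limsup_le_of_le ((bdd_below_of_abs hu).isCoboundedUnder_flip)
      (Eventually.of_forall fun n => (abs_le.1 (hu n)).2)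

lemma exists_lim {F : ℕ → Ω → ℝ} {C c : ℝ} (hm : ∀ n, Measurable (F n))
    (hC : ∀ n ω, |F n ω| ≤ C) (hint : ∀ᶠ n in atTop, ∫ ω, F n ω ∂P = c)
    (hconv : ∀ᵐ ω ∂P, ∃ l, Tendsto (fun n => F n ω) atTop (𝓝 l)) :
    ∃ g : Ω → ℝ, Measurable g ∧ (∀ ω, |g ω| ≤ C) ∧ ∫ ω, g ω ∂P = c ∧
      ∀ᵐ ω ∂P, Tendsto (fun n => F n ω) atTop (𝓝 (g ω)) := by
  have hae : ∀ᵐ ω ∂P, Tendsto (fun n => F n ω) atTop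
      (𝓝 (limsup (fun n => F n ω) atTop)) := by
    filter_upwards [hconv] with ω ⟨l, hl⟩
    rwa [hl.limsup_eq]
  refine ⟨fun ω => limsup (fun n => F n ω) atTop, Measurable.limsup hm,
    fun ω => abs_limsup_le (hC · ω), ?_, hae⟩
  have := tendsto_integral_of_dominated_convergence (fun _ => C)
    (fun n => (hm n).aestronglyMeasurable) (integrable_const C)
    (fun n => ae_of_all _ (hC n)) hae
  refine tendsto_nhds_unique this (tendsto_const_nhds.congr' ?_)
  filter_upwards [hint] with n hn using hn.symm

lemma comp_conv {A : ℕ → (Ω → ℝ) → Ω → ℝ}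
    (hmono : ∀ n f g, (∀ ω, f ω ≤ g ω) → ∀ ω, A n f ω ≤ A n g ω)
    (hsub : ∀ n f g ω, A n (fun ω => f ω - g ω) ω = A n f ω - A n g ω)
    (hmeas : ∀ n f, Measurable f → Measurable (A n f))
    (hbd : ∀ n f C, (∀ ω, |f ω| ≤ C) → ∀ ω, |A n f ω| ≤ C)
    (hconv : ∀ f C, Measurable f → (∀ ω, |f ω| ≤ C) → ∃ g : Ω → ℝ, Measurable g ∧
      (∀ ω, |g ω| ≤ C) ∧ ∫ ω, g ω ∂P = ∫ ω, f ω ∂P ∧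
      ∀ᵐ ω ∂P, Tendsto (fun n => A n f ω) atTop (𝓝 (g ω)))
    {B : ℕ → Ω → ℝ} {g : Ω → ℝ} {C : ℝ} (hBm : ∀ n, Measurable (B n))
    (hBC : ∀ n ω, |B n ω| ≤ C) (hgm : Measurable g) (hgC : ∀ ω, |g ω| ≤ C)
    (hBg : ∀ᵐ ω ∂P, Tendsto (fun n => B n ω) atTop (𝓝 (g ω))) :
    ∀ᵐ ω ∂P, ∃ l, Tendsto (fun n => A n (B n) ω) atTop (𝓝 l) := by
  obtain ⟨gs, hgsm, hgsC, -, hgs⟩ := hconv g C hgm hgC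
  let h : ℕ → Ω → ℝ := fun N ω => ⨆ m : ℕ, |B (N + m) ω - g ω|
  have hb1 : ∀ n ω, |B n ω - g ω| ≤ 2 * C := fun n ω =>
    (abs_sub _ _).trans (by linarith [hBC n ω, hgC ω])
  have hbdd : ∀ N ω, BddAbove (Set.range fun m : ℕ => |B (N + m) ω - g ω|) := fun N ω =>
    ⟨2 * C, by rintro _ ⟨m, rfl⟩; exact hb1 _ _⟩
  have hle : ∀ N n ω, N ≤ n → |B n ω - g ω| ≤ h N ω := fun N n ω hn => by
    obtain ⟨m, rfl⟩ := Nat.exists_eq_add_of_le hn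
    exact le_ciSup (hbdd N ω) m
  have hhC : ∀ N ω, |h N ω| ≤ 2 * C := fun N ω => by
    rw [abs_of_nonneg ((abs_nonneg _).trans (hle N N ω le_rfl))]
    exact ciSup_le fun m => hb1 _ _
  have hhm : ∀ N, Measurable (h N) := fun N =>
    Measurable.iSup fun m => ((hBm _).sub hgm).abs
  have hh0 : ∀ᵐ ω ∂P, Tendsto (fun N => h N ω) atTop (𝓝 0) := by
    filter_upwards [hBg] with ω hω
    rw [Metric.tendsto_atTop'] at hω ⊢
    intro ε hε
    obtain ⟨N, hN⟩ := hω (ε / 2) (by positivity)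
    refine ⟨N, fun n hn => ?_⟩
    rw [Real.dist_eq, sub_zero, abs_of_nonneg ((abs_nonneg _).trans (hle n n ω le_rfl))]
    refine lt_of_le_of_lt (ciSup_le fun m => ?_) (half_lt_self hε)
    exact (hN (n + m) (by omega)).le
  choose hs hsm hsC hsint hsconv using fun N => hconv (h N) (2 * C) (hhm N) (hhC N)
  have hintlim : Tendsto (fun N => ∫ ω, hs N ω ∂P) atTop (𝓝 0) := by
    have := tendsto_integral_of_dominated_convergence (fun _ => 2 * C)
      (fun n => (hhm n).aestronglyMeasurable) (integrable_const (2 * C))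
      (fun n => ae_of_all _ (hhC n)) hh0
    simpa [hsint] using this
  let D : Ω → ℝ := fun ω => limsup (fun n => |A n (B n) ω - gs ω|) atTop
  have hd1 : ∀ n ω, |(|A n (B n) ω - gs ω|)| ≤ 2 * C := fun n ω => by
    rw [abs_abs]
    exact (abs_sub _ _).trans (by linarith [hbd n _ _ (hBC n) ω, hgsC ω])
  have hDm : Measurable D := Measurable.limsup fun n => ((hmeas n _ (hBm n)).sub hgsm).abs
  have hDC : ∀ ω, |D ω| ≤ 2 * C := fun ω => abs_limsup_le (hd1 · ω)
  have hD0 : ∀ ω, 0 ≤ D ω := fun ω =>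
    le_limsup_of_frequently_le (Frequently.of_forall fun n => abs_nonneg _)
      (bdd_above_of_abs (hd1 · ω))
  have hDle : ∀ N, ∀ᵐ ω ∂P, D ω ≤ hs N ω := by
    intro N
    filter_upwards [hgs, hsconv N] with ω h1 h2
    have h3 : Tendsto (fun n => A n (h N) ω + |A n g ω - gs ω|) atTop (𝓝 (hs N ω)) := by
      have : Tendsto (fun n => |A n g ω - gs ω|) atTop (𝓝 0) := by
        simpa using (h1.sub_const (gs ω)).abs
      simpa using h2.add this
    rw [← h3.limsup_eq]
    refine limsup_le_limsup ?_ ((bdd_below_of_abs (hd1 · ω)).isCoboundedUnder_flip)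
      h3.isBoundedUnder_le
    filter_upwards [eventually_ge_atTop N] with n hn
    have h4 : |A n (B n) ω - A n g ω| ≤ A n (h N) ω := by
      rw [abs_le]
      constructor
      · have := hmono n (fun ω => g ω - B n ω) (h N)
          (fun ω => (neg_sub (B n ω) (g ω)) ▸ (neg_le_abs _).trans (hle N n ω hn)) ω
        rw [hsub] at this; linarith
      · have := hmono n (fun ω => B n ω - g ω) (h N)
          (fun ω => (le_abs_self _).trans (hle N n ω hn)) ω
        rw [hsub] at this; linarith
    have := abs_sub_le (A n (B n) ω) (A n g ω) (gs ω)
    linarith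
  have hDint : ∫ ω, D ω ∂P = 0 := by
    refine le_antisymm ?_ (integral_nonneg hD0)
    refine ge_of_tendsto' hintlim fun N => ?_
    exact integral_mono_ae (integrable_of_bdd hDm hDC) (integrable_of_bdd (hsm N) (hsC N))
      (hDle N)
  rw [integral_eq_zero_iff_of_nonneg hD0 (integrable_of_bdd hDm hDC)] at hDint
  filter_upwards [hDint] with ω hω
  refine ⟨gs ω, ?_⟩
  rw [tendsto_iff_norm_sub_tendsto_zero]
  exact tendsto_zero_of_limsup (fun n => norm_nonneg _)
    (fun n => (le_abs_self _).trans (hd1 n ω)) hω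

variable {d : ℕ}

/-- The box `[-n, n)^d` of integer points. -/
def Bx (d n : ℕ) : Finset (Fin d → ℤ) := Fintype.piFinset fun _ => Finset.Ico (-(n : ℤ)) n

lemma card_Bx (d n : ℕ) : ((Bx d n).card : ℝ) = (2 * (n : ℝ)) ^ d := by
  rw [Bx, Fintype.card_piFinset]
  simp only [Int.card_Ico, Finset.prod_const, Finset.card_univ, Fintype.card_fin]
  push_cast
  congr 1
  have : ((n : ℤ) - -(n : ℤ)).toNat = 2 * n := by omega
  rw [this]; push_cast; ring

/-- one-coordinate average -/
def avg1 (φ : (Fin d → ℤ) → Ω → Ω) (i : Fin d) (n : ℕ) (f : Ω → ℝ) (ω : Ω) : ℝ :=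
  (2 * (n : ℝ))⁻¹ * ∑ j ∈ Finset.Ico (-(n : ℤ)) n, f (φ (Pi.single i j) ω)

/-- iterated average -/
def avgL (φ : (Fin d → ℤ) → Ω → Ω) : List (Fin d) → ℕ → (Ω → ℝ) → Ω → ℝ
  | [], _, f => f
  | i :: l, n, f => avg1 φ i n (avgL φ l n f)

variable {φ : (Fin d → ℤ) → Ω → Ω}

lemma avg1_mono (i : Fin d) (n : ℕ) (f g : Ω → ℝ) (h : ∀ ω, f ω ≤ g ω) (ω : Ω) :
    avg1 φ i n f ω ≤ avg1 φ i n g ω := by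
  unfold avg1
  gcongr
  exact h _

lemma avg1_sub (i : Fin d) (n : ℕ) (f g : Ω → ℝ) (ω : Ω) :
    avg1 φ i n (fun ω => f ω - g ω) ω = avg1 φ i n f ω - avg1 φ i n g ω := by
  simp [avg1, Finset.sum_sub_distrib, mul_sub]

lemma avg1_meas (hφ : ∀ x, MeasurePreserving (φ x) P P) (i : Fin d) (n : ℕ) (f : Ω → ℝ)
    (hf : Measurable f) : Measurable (avg1 φ i n f) :=
  (Finset.measurable_fun_sum _ fun j _ => hf.comp (hφ _).measurable).const_mul _

lemma avg1_bd (i : Fin d) (n : ℕ) (f : Ω → ℝ) (C : ℝ) (hC : ∀ ω, |f ω| ≤ C) (ω : Ω) :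
    |avg1 φ i n f ω| ≤ C := by
  have h0 : 0 ≤ C := (abs_nonneg _).trans (hC ω)
  unfold avg1
  rcases Nat.eq_zero_or_pos n with rfl | hn
  · simpa
  have hn' : (0 : ℝ) < 2 * n := by positivity
  rw [abs_mul, abs_of_pos (inv_pos.2 hn'), inv_mul_le_iff₀ hn']
  refine (Finset.abs_sum_le_sum_abs _ _).trans ?_
  refine (Finset.sum_le_card_nsmul _ _ C (fun k _ => hC _)).trans ?_
  have : ((n : ℤ) + (n : ℤ)).toNat = 2 * n := by omega
  simp [this]

lemma avg1_int (hφ : ∀ x, MeasurePreserving (φ x) P P) (i : Fin d) (n : ℕ) (hn : 0 < n)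
    (f : Ω → ℝ) (C : ℝ) (hf : Measurable f) (hC : ∀ ω, |f ω| ≤ C) :
    ∫ ω, avg1 φ i n f ω ∂P = ∫ ω, f ω ∂P := by
  have hx : ∀ x, ∫ ω, f (φ x ω) ∂P = ∫ ω, f ω ∂P := fun x => by
    rw [← integral_map (hφ x).measurable.aemeasurable, (hφ x).map_eq]
    exact hf.aestronglyMeasurable
  unfold avg1
  rw [integral_const_mul, integral_finsetSum]
  · simp only [hx]
    have : ((n : ℤ) + (n : ℤ)).toNat = 2 * n := by omega
    simp [this]
    field_simp
  · intro j _
    exact integrable_of_bdd (hf.comp (hφ _).measurable) (fun ω => hC _)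

lemma avg1_conv (hφ : ∀ x, MeasurePreserving (φ x) P P) (h0 : ∀ ω, φ 0 ω = ω)
    (hadd : ∀ x y ω, φ (x + y) ω = φ x (φ y ω)) (i : Fin d) (f : Ω → ℝ) (C : ℝ)
    (hf : Measurable f) (hC : ∀ ω, |f ω| ≤ C) :
    ∃ g : Ω → ℝ, Measurable g ∧
      (∀ ω, |g ω| ≤ C) ∧ ∫ ω, g ω ∂P = ∫ ω, f ω ∂P ∧
      ∀ᵐ ω ∂P, Tendsto (fun n => avg1 φ i n f ω) atTop (𝓝 (g ω)) := by
  refine exists_lim (fun n => avg1_meas hφ i n f hf) (fun n => avg1_bd i n f C hC) ?_ ?_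
  · filter_upwards [eventually_gt_atTop 0] with n hn using avg1_int hφ i n hn f C hf hC
  set T := φ (Pi.single i 1) with hT
  set S := φ (Pi.single i (-1)) with hS
  have hTi : ∀ (k : ℕ) ω, T^[k] ω = φ (Pi.single i (k : ℤ)) ω := by
    intro k
    induction k with
    | zero => intro ω; simp [h0]
    | succ k ih =>
      intro ω
      rw [Function.iterate_succ_apply, ih, hT, ← hadd, ← Pi.single_add]; simp
  have hSi : ∀ (k : ℕ) ω, S^[k] ω = φ (Pi.single i (-(k : ℤ))) ω := by
    intro k
    induction k with
    | zero => intro ω; simp [h0]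
    | succ k ih =>
      intro ω
      rw [Function.iterate_succ_apply, ih, hS, ← hadd, ← Pi.single_add]; congr 2; push_cast; ring
  have hsum : ∀ (n : ℕ) ω, ∑ j ∈ Finset.Ico (-(n : ℤ)) n, f (φ (Pi.single i j) ω) =
      birkhoffSum T f n ω + birkhoffSum S f n (S ω) := by
    intro n ω
    induction n with
    | zero => simp
    | succ n ih =>
      have : Finset.Ico (-((n + 1 : ℕ) : ℤ)) (n + 1 : ℕ) =
          insert (-((n : ℤ) + 1)) (insert (n : ℤ) (Finset.Ico (-(n : ℤ)) n)) := by
        ext j; simp only [Finset.mem_Ico, Finset.mem_insert]; omega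
      rw [this, Finset.sum_insert (by simp), Finset.sum_insert (by simp), ih,
        birkhoffSum_succ, birkhoffSum_succ, hTi, ← Function.iterate_succ_apply, hSi]
      push_cast
      ring
  have h1 := birkhoff_ae (hφ (Pi.single i 1)) hf hC
  have h2 := (hφ (Pi.single i (-1))).quasiMeasurePreserving.ae
    (birkhoff_ae (hφ (Pi.single i (-1))) hf hC)
  filter_upwards [h1, h2] with ω ⟨a, ha⟩ ⟨b, hb⟩
  refine ⟨2⁻¹ * (a + b), ((ha.add hb).const_mul (2⁻¹ : ℝ)).congr fun n => ?_⟩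
  simp only [avg1, hsum, birkhoffAverage, smul_eq_mul]
  rw [mul_inv]; ring

lemma avgL_meas (hφ : ∀ x, MeasurePreserving (φ x) P P) (l : List (Fin d)) (n : ℕ) (f : Ω → ℝ)
    (hf : Measurable f) : Measurable (avgL φ l n f) := by
  induction l with
  | nil => exact hf
  | cons i l ih => exact avg1_meas hφ i n _ ih

lemma avgL_bd (l : List (Fin d)) (n : ℕ) (f : Ω → ℝ) (C : ℝ) (hC : ∀ ω, |f ω| ≤ C) (ω : Ω) :
    |avgL φ l n f ω| ≤ C := by
  induction l generalizing ω with
  | nil => exact hC ω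
  | cons i l ih => exact avg1_bd i n _ C ih ω

lemma avgL_int (hφ : ∀ x, MeasurePreserving (φ x) P P) (l : List (Fin d)) (n : ℕ) (hn : 0 < n)
    (f : Ω → ℝ) (C : ℝ) (hf : Measurable f) (hC : ∀ ω, |f ω| ≤ C) :
    ∫ ω, avgL φ l n f ω ∂P = ∫ ω, f ω ∂P := by
  induction l with
  | nil => rfl
  | cons i l ih =>
    rw [avgL, avg1_int hφ i n hn _ C (avgL_meas hφ l n f hf) (avgL_bd l n f C hC), ih]

lemma avgL_conv (hφ : ∀ x, MeasurePreserving (φ x) P P) (h0 : ∀ ω, φ 0 ω = ω)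
    (hadd : ∀ x y ω, φ (x + y) ω = φ x (φ y ω)) (l : List (Fin d)) (f : Ω → ℝ) (C : ℝ)
    (hf : Measurable f) (hC : ∀ ω, |f ω| ≤ C) :
    ∃ g : Ω → ℝ, Measurable g ∧
      (∀ ω, |g ω| ≤ C) ∧ ∫ ω, g ω ∂P = ∫ ω, f ω ∂P ∧
      ∀ᵐ ω ∂P, Tendsto (fun n => avgL φ l n f ω) atTop (𝓝 (g ω)) := by
  induction l with
  | nil => exact ⟨f, hf, hC, rfl, ae_of_all _ fun ω => tendsto_const_nhds⟩
  | cons i l ih =>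
    obtain ⟨g, hgm, hgC, -, hg⟩ := ih
    refine exists_lim (fun n => avgL_meas hφ (i :: l) n f hf)
      (fun n => avgL_bd (i :: l) n f C hC) ?_ ?_
    · filter_upwards [eventually_gt_atTop 0] with n hn using avgL_int hφ _ n hn f C hf hC
    · exact comp_conv (A := avg1 φ i) (avg1_mono i) (avg1_sub i) (avg1_meas hφ i) (avg1_bd i)
        (avg1_conv hφ h0 hadd i) (fun n => avgL_meas hφ l n f hf)
        (fun n => avgL_bd l n f C hC) hgm hgC hg

lemma avgL_eq (h0 : ∀ ω, φ 0 ω = ω)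
    (hadd : ∀ x y ω, φ (x + y) ω = φ x (φ y ω)) (l : List (Fin d)) (hl : l.Nodup) (n : ℕ)
    (f : Ω → ℝ) (ω : Ω) :
    avgL φ l n f ω = ((2 * (n : ℝ)) ^ l.length)⁻¹ *
      ∑ x ∈ Fintype.piFinset (fun i => if i ∈ l then Finset.Ico (-(n : ℤ)) n else {0}),
        f (φ x ω) := by
  induction l generalizing ω with
  | nil =>
    have : Fintype.piFinset (fun _ : Fin d => ({0} : Finset ℤ)) = {0} := by
      ext x; simp [funext_iff]
    simp [avgL, this, h0]
  | cons i l ih =>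
    rw [List.nodup_cons] at hl
    rw [avgL, avg1]
    simp only [ih hl.2, ← Finset.mul_sum, ← hadd]
    rw [← mul_assoc, ← mul_inv, List.length_cons, pow_succ', ← Finset.sum_product']
    congr 1
    refine Finset.sum_nbij' (fun p => p.2 + Pi.single i p.1)
      (fun x => (x i, Function.update x i 0)) ?_ ?_ ?_ ?_ ?_
    · rintro ⟨j, y⟩ h
      simp only [Finset.mem_product, Fintype.mem_piFinset] at h ⊢
      intro k
      have hk := h.2 k
      by_cases hki : k = i
      · subst hki
        simp only [hl.1, if_false, Finset.mem_singleton] at hk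
        simp only [List.mem_cons, true_or, if_true, Pi.add_apply, hk, Pi.single_eq_same, zero_add]
        exact h.1
      · simpa [hki] using hk
    · intro x h
      simp only [Finset.mem_product, Fintype.mem_piFinset] at h ⊢
      refine ⟨by simpa using h i, fun k => ?_⟩
      by_cases hki : k = i
      · subst hki; simp [hl.1]
      · simpa [hki] using h k
    · rintro ⟨j, y⟩ h
      simp only [Finset.mem_product, Fintype.mem_piFinset] at h
      have hk := h.2 i
      simp only [hl.1, if_false, Finset.mem_singleton] at hk
      ext k
      · simp [hk]
      · by_cases hki : k = i
        · subst hki; simp [hk]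
        · simp [hki]
    · intro x h
      ext k
      by_cases hki : k = i
      · subst hki; simp
      · simp [hki]
    · rintro ⟨j, y⟩ h
      rfl

lemma abs_sum_sub_le {ι : Type*} {s t : Finset ι} (hst : s ⊆ t) {F : ι → ℝ} {C : ℝ}
    (hC : ∀ i, |F i| ≤ C) :
    |∑ i ∈ t, F i - ∑ i ∈ s, F i| ≤ C * ((t.card : ℝ) - s.card) := by
  classical
  rw [← Finset.sum_sdiff hst, add_sub_cancel_right]
  refine (Finset.abs_sum_le_sum_abs _ _).trans ?_
  refine (Finset.sum_le_card_nsmul _ _ C (fun k _ => hC _)).trans ?_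
  rw [Finset.card_sdiff_of_subset hst, nsmul_eq_mul, Nat.cast_sub (Finset.card_le_card hst)]
  linarith

lemma ratio_lim (d k : ℕ) : Tendsto (fun n : ℕ => ((2 * (n : ℝ)) ^ d)⁻¹ *
    ((2 * ((n + k : ℕ) : ℝ)) ^ d)) atTop (𝓝 1) := by
  have h : Tendsto (fun n : ℕ => (1 + (k : ℝ) / n) ^ d) atTop (𝓝 1) := by
    have := ((tendsto_const_div_atTop_nhds_zero_nat (k : ℝ)).const_add 1).pow d
    simpa using this
  refine h.congr' ?_
  filter_upwards [eventually_gt_atTop 0] with n hn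
  have : (n : ℝ) ≠ 0 := by positivity
  rw [← inv_pow, ← mul_pow]
  congr 1
  push_cast
  field_simp

lemma ratio_lim' (d k : ℕ) (C : ℝ) : Tendsto (fun n : ℕ => ((2 * (n : ℝ)) ^ d)⁻¹ *
    (C * ((2 * ((n + k : ℕ) : ℝ)) ^ d - (2 * (n : ℝ)) ^ d))) atTop (𝓝 0) := by
  have h := ((ratio_lim d k).sub (ratio_lim d 0)).const_mul C
  simp only [sub_self, mul_zero] at h
  refine h.congr fun n => ?_
  simp only [add_zero]; ring

theorem wiener (hφ : ∀ x, MeasurePreserving (φ x) P P) (h0 : ∀ ω, φ 0 ω = ω)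
    (hadd : ∀ x y ω, φ (x + y) ω = φ x (φ y ω))
    (herg : ∀ A : Set Ω, MeasurableSet A → (∀ x, φ x ⁻¹' A = A) → P A = 0 ∨ P A = 1)
    (f : Ω → ℝ) (C : ℝ) (hf : Measurable f) (hC : ∀ ω, |f ω| ≤ C) :
    ∀ᵐ ω ∂P, Tendsto (fun n : ℕ => ((2 * (n : ℝ)) ^ d)⁻¹ * ∑ x ∈ Bx d n, f (φ x ω)) atTop
      (𝓝 (∫ ω, f ω ∂P)) := by
  have heq : ∀ n ω, avgL φ (List.finRange d) n f ω =
      ((2 * (n : ℝ)) ^ d)⁻¹ * ∑ x ∈ Bx d n, f (φ x ω) := fun n ω => by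
    rw [avgL_eq h0 hadd _ (List.nodup_finRange d)]
    simp [Bx]
  obtain ⟨g, hgm, hgC, hgint, hg⟩ := avgL_conv hφ h0 hadd (List.finRange d) f C hf hC
  set L : Ω → ℝ := fun ω => limsup (fun n => avgL φ (List.finRange d) n f ω) atTop with hL
  have hLm : Measurable L := Measurable.limsup fun n => avgL_meas hφ _ n f hf
  have hLg : ∀ᵐ ω ∂P, L ω = g ω := by
    filter_upwards [hg] with ω hω using hω.limsup_eq
  have hinv : ∀ z ω, L (φ z ω) = L ω := by
    intro z ω
    refine limsup_eq_of_sub_tendsto (avgL_bd _ · f C hC _) (avgL_bd _ · f C hC _) ?_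
    obtain ⟨k, hk⟩ : ∃ k : ℕ, ∀ i, |z i| ≤ k := by
      refine ⟨∑ i, (z i).natAbs, fun i => ?_⟩
      rw [Int.abs_eq_natAbs]
      exact_mod_cast Finset.single_le_sum (f := fun i => (z i).natAbs)
        (fun _ _ => Nat.zero_le _) (Finset.mem_univ i)
    refine squeeze_zero_norm (fun n => ?_) (ratio_lim' d k (2 * C))
    have e1 : ∑ x ∈ Bx d n, f (φ x (φ z ω)) =
        ∑ x ∈ (Bx d n).map (addRightEmbedding z), f (φ x ω) := by
      rw [Finset.sum_map]
      simp [← hadd]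
    have hs1 : Bx d n ⊆ Bx d (n + k) := by
      refine Fintype.piFinset_subset _ _ fun i => ?_
      refine Finset.Ico_subset_Ico ?_ ?_ <;> push_cast <;> omega
    have hs2 : (Bx d n).map (addRightEmbedding z) ⊆ Bx d (n + k) := by
      intro x hx
      simp only [Finset.mem_map, addRightEmbedding_apply] at hx
      obtain ⟨y, hy, rfl⟩ := hx
      simp only [Bx, Fintype.mem_piFinset, Finset.mem_Ico] at hy ⊢
      intro i
      have h1 := hy i
      have h2 := abs_le.1 (hk i)
      simp only [Pi.add_apply]
      push_cast
      omega
    have b1 := abs_sum_sub_le hs1 (F := fun x => f (φ x ω)) (fun x => hC _)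
    have b2 := abs_sum_sub_le hs2 (F := fun x => f (φ x ω)) (fun x => hC _)
    rw [Finset.card_map] at b2
    rw [card_Bx, card_Bx] at b1 b2
    rw [heq, heq, e1, ← mul_sub, norm_mul, Real.norm_eq_abs, abs_of_nonneg (by positivity)]
    gcongr
    rw [Real.norm_eq_abs]
    rw [abs_le] at *
    constructor <;> linarith [b1.1, b1.2, b2.1, b2.2]
  have hconst : ∃ c, ∀ᵐ ω ∂P, L ω = c := by
    have hset : ∀ A : Set ℝ, MeasurableSet A → (∀ᵐ ω ∂P, L ω ∈ A) ∨ (∀ᵐ ω ∂P, L ω ∉ A) := by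
      intro A hA
      rcases herg (L ⁻¹' A) (hLm hA) (fun x => by ext ω; simp [hinv]) with h | h
      · right; exact measure_eq_zero_iff_ae_notMem.1 h
      · left; exact (mem_ae_iff_prob_eq_one (hLm hA)).2 h
    have hLC : ∀ ω, |L ω| ≤ C := fun ω => abs_limsup_le (avgL_bd _ · f C hC _)
    exact exists_eventuallyEq_const_of_forall_separating MeasurableSet hset
  obtain ⟨c, hc⟩ := hconst
  have hcint : ∫ ω, f ω ∂P = c := by
    rw [← hgint, integral_congr_ae (g := fun _ => c)]
    · simp
    · filter_upwards [hc, hLg] with ω h1 h2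
      rw [← h2, h1]
  filter_upwards [hg, hc, hLg] with ω h1 h2 h3
  rw [hcint, ← h2, h3]
  simpa only [heq] using h1

end Wiener

section Alg

lemma finrank_sup_inf {M : Type} [AddCommGroup M] [Module.IsTorsionFree ℤ M] (s t : Submodule ℤ M)
    [Module.Finite ℤ s] [Module.Finite ℤ t] :
    Module.finrank ℤ (s ⊔ t : Submodule ℤ M) + Module.finrank ℤ (s ⊓ t : Submodule ℤ M) =
    Module.finrank ℤ s + Module.finrank ℤ t := by
  have : Module.Finite ℤ (s ⊓ t : Submodule ℤ M) :=
    Module.Finite.of_injective (Submodule.inclusion (inf_le_left : s ⊓ t ≤ s))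
      (Submodule.inclusion_injective _)
  rw [← Nat.cast_inj (R := Cardinal), Nat.cast_add, Nat.cast_add, Module.finrank_eq_rank,
    Module.finrank_eq_rank, Module.finrank_eq_rank, Module.finrank_eq_rank]
  exact Submodule.rank_sup_add_rank_inf_eq s t

/-- rational dependence -/
def Dep {M : Type} [AddCommGroup M] (v : M) (N : Submodule ℤ M) : Prop :=
  ∃ n : ℤ, n ≠ 0 ∧ n • v ∈ N

lemma Dep.mono {M : Type} [AddCommGroup M] {v : M} {N N' : Submodule ℤ M} (h : N ≤ N')
    (hd : Dep v N) : Dep v N' := by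
  obtain ⟨n, h0, hn⟩ := hd
  exact ⟨n, h0, h hn⟩

lemma finrank_span_ne {M : Type} [AddCommGroup M] [Module.IsTorsionFree ℤ M] {v : M} (hv : v ≠ 0) :
    Module.finrank ℤ (Submodule.span ℤ {v}) = 1 := by
  rw [← (LinearEquiv.toSpanNonzeroSingleton ℤ M v hv).finrank_eq]
  simp

open Classical in
lemma rank_insert {M : Type} [AddCommGroup M] [Module.IsTorsionFree ℤ M] (N : Submodule ℤ M)
    [Module.Finite ℤ N] (v : M) :
    Module.finrank ℤ (N ⊔ Submodule.span ℤ {v} : Submodule ℤ M) =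
      Module.finrank ℤ N + if Dep v N then 0 else 1 := by
  have h := finrank_sup_inf N (Submodule.span ℤ {v})
  split_ifs with hd
  · obtain ⟨n, h0, hn⟩ := hd
    have : Submodule.span ℤ {n • v} ≤ N ⊓ Submodule.span ℤ {v} := by
      rw [Submodule.span_singleton_le_iff_mem]
      exact ⟨hn, Submodule.smul_mem _ _ (Submodule.mem_span_singleton_self v)⟩
    have h1 : Module.finrank ℤ (N ⊓ Submodule.span ℤ {v} : Submodule ℤ M) =
        Module.finrank ℤ (Submodule.span ℤ {v}) := by
      apply le_antisymm
      · exact Submodule.finrank_mono inf_le_right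
      · rcases eq_or_ne v 0 with hv | hv
        · have hb : Submodule.span ℤ {v} = ⊥ := by rw [hv]; exact Submodule.span_zero_singleton ℤ
          rw [hb, finrank_bot]
          exact Nat.zero_le _
        · have hfin : Module.Finite ℤ (N ⊓ Submodule.span ℤ {v} : Submodule ℤ M) :=
            Module.Finite.of_injective (Submodule.inclusion
              (inf_le_left : N ⊓ Submodule.span ℤ {v} ≤ N))
              (Submodule.inclusion_injective _)
          rw [finrank_span_ne hv, ← finrank_span_ne (v := n • v) (smul_ne_zero h0 hv)]
          exact Submodule.finrank_mono this
    omega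
  · have hv : v ≠ 0 := by
      rintro rfl
      exact hd ⟨1, one_ne_zero, by simp⟩
    have h1 : N ⊓ Submodule.span ℤ {v} = ⊥ := by
      rw [Submodule.eq_bot_iff]
      rintro x ⟨hx1, hx2⟩
      obtain ⟨n, rfl⟩ := Submodule.mem_span_singleton.1 hx2
      by_contra hne
      refine hd ⟨n, ?_, hx1⟩
      rintro rfl
      simp at hne
    rw [h1, finrank_span_ne hv] at h
    simpa using h

variable {d : ℕ}

/-- rank of the span of boundaries -/
def rk (S : Set (ElemCube d)) : ℕ := Module.finrank ℤ (Submodule.span ℤ (boundaryCube d '' S))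

open Classical in
lemma rk_insert (S : Finset (ElemCube d)) (Q : ElemCube d) :
    rk (↑(insert Q S) : Set (ElemCube d)) = rk (S : Set (ElemCube d)) +
      if Dep (boundaryCube d Q) (Submodule.span ℤ (boundaryCube d '' S)) then 0 else 1 := by
  have : Module.Finite ℤ (Submodule.span ℤ (boundaryCube d '' (S : Set (ElemCube d)))) :=
    Module.Finite.span_of_finite ℤ (S.finite_toSet.image _)
  rw [rk, rk, ← rank_insert, Finset.coe_insert, Set.image_insert_eq, Submodule.span_insert,
    sup_comm]

lemma rk_mono {S S' : Finset (ElemCube d)} (h : S ⊆ S') :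
    rk (S : Set (ElemCube d)) ≤ rk (S' : Set (ElemCube d)) := by
  have : Module.Finite ℤ (Submodule.span ℤ (boundaryCube d '' (S' : Set (ElemCube d)))) :=
    Module.Finite.span_of_finite ℤ (S'.finite_toSet.image _)
  exact Submodule.finrank_mono (Submodule.span_mono (Set.image_mono (by exact_mod_cast h)))

open Classical in
lemma rk_le_add {S S' : Finset (ElemCube d)} :
    rk (↑(S' ∪ S) : Set (ElemCube d)) ≤ rk (S : Set (ElemCube d)) + S'.card := by
  induction S' using Finset.induction_on with
  | empty => simp
  | insert a s ha ih =>
    rw [Finset.insert_union, rk_insert, Finset.card_insert_of_notMem ha]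
    split_ifs <;> omega

lemma rk_lip {S S' : Finset (ElemCube d)} (h : S ⊆ S') :
    (rk (S' : Set (ElemCube d)) : ℝ) ≤ rk (S : Set (ElemCube d)) + (S'.card - S.card) := by
  classical
  have h1 := rk_le_add (S := S) (S' := S' \ S)
  rw [Finset.sdiff_union_of_subset h, Finset.card_sdiff_of_subset h] at h1
  rw [← Nat.cast_sub (Finset.card_le_card h)]
  exact_mod_cast h1

/-- A key giving a translation invariant linear order. -/
def ckey (Q : ElemCube d) : Lex (Fin d → ℤ ×ₗ Bool) := toLex fun i => toLex (Q i)

lemma ckey_inj {Q Q' : ElemCube d} (h : ckey Q = ckey Q') : Q = Q' := by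
  funext i
  exact congrFun h i

lemma ckey_translate (x : Fin d → ℤ) (Q Q' : ElemCube d) :
    ckey (translateCube x Q) < ckey (translateCube x Q') ↔ ckey Q < ckey Q' := by
  have key : ∀ R R' : ElemCube d, ckey R < ckey R' ↔ ∃ i, (∀ j < i, R j = R' j) ∧
      ((R i).1 < (R' i).1 ∨ (R i).1 = (R' i).1 ∧ (R i).2 < (R' i).2) := by
    intro R R'
    constructor
    · rintro ⟨i, h1, h2⟩
      exact ⟨i, h1, Prod.Lex.toLex_lt_toLex.1 h2⟩
    · rintro ⟨i, h1, h2⟩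
      exact ⟨i, h1, Prod.Lex.toLex_lt_toLex.2 h2⟩
  rw [key, key]
  simp [translateCube, Prod.ext_iff]

open Classical in
lemma rk_eq_sum (S : Finset (ElemCube d)) :
    rk (S : Set (ElemCube d)) = ∑ Q ∈ S, if Dep (boundaryCube d Q)
      (Submodule.span ℤ (boundaryCube d '' {Q' | Q' ∈ S ∧ ckey Q' < ckey Q})) then 0 else 1 := by
  induction S using Finset.induction_on_max_value ckey with
  | empty =>
    rw [rk, Finset.coe_empty, Set.image_empty, Submodule.span_empty, finrank_bot,
      Finset.sum_empty]
  | insert a s ha hmax ih =>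
    have hlt : ∀ x ∈ s, ckey x < ckey a := fun x hx =>
      lt_of_le_of_ne (hmax x hx) (fun h => ha (ckey_inj h ▸ hx))
    rw [rk_insert, Finset.sum_insert ha, ih, add_comm]
    have e1 : {Q' | Q' ∈ insert a s ∧ ckey Q' < ckey a} = (s : Set (ElemCube d)) := by
      ext Q'
      simp only [Finset.mem_insert, Set.mem_ofPred_eq, Finset.mem_coe]
      constructor
      · rintro ⟨rfl | h, h2⟩
        · exact absurd h2 (lt_irrefl _)
        · exact h
      · exact fun h => ⟨Or.inr h, hlt _ h⟩
    rw [e1]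
    congr 1
    refine Finset.sum_congr rfl fun x hx => ?_
    have e2 : {Q' | Q' ∈ insert a s ∧ ckey Q' < ckey x} = {Q' | Q' ∈ s ∧ ckey Q' < ckey x} := by
      ext Q'
      simp only [Finset.mem_insert, Set.mem_ofPred_eq]
      constructor
      · rintro ⟨rfl | h, h2⟩
        · exact absurd (h2.trans (hlt x hx)) (lt_irrefl _)
        · exact ⟨h, h2⟩
      · exact fun h => ⟨Or.inr h.1, h.2⟩
    rw [e2]

lemma boundaryHom_single (Q : ElemCube d) (n : ℤ) :
    boundaryHom d (Finsupp.single Q n) = n • boundaryCube d Q := by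
  simp [boundaryHom]

lemma boundaryCube_succ (Q : ElemCube (d + 1)) :
    boundaryCube (d + 1) Q = (if (Q 0).2 then
          Finsupp.single (Fin.cons ((Q 0).1 + 1, false) (fun i => Q i.succ)) (1 : ℤ)
            - Finsupp.single (Fin.cons ((Q 0).1, false) (fun i => Q i.succ)) (1 : ℤ)
        else 0)
      + (if (Q 0).2 then (-1 : ℤ) else 1) •
          Finsupp.mapDomain (Fin.cons (Q 0)) (boundaryCube d (fun i => Q i.succ)) := rfl

lemma cubeDim_cons (a : ℤ × Bool) (R : ElemCube d) :
    cubeDim (Fin.cons a R : ElemCube (d + 1)) = (if a.2 then 1 else 0) + cubeDim R := by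
  unfold cubeDim
  rw [Finset.card_filter, Finset.card_filter, Fin.sum_univ_succ]
  simp only [Fin.cons_zero, Fin.cons_succ]

/-- Combinatorial face relation. -/
def IsFace (Q Q' : ElemCube d) : Prop := ∀ i, (Q' i).1 ≤ (Q i).1 ∧
  (Q i).1 + (if (Q i).2 then 1 else 0) ≤ (Q' i).1 + (if (Q' i).2 then 1 else 0)

lemma IsFace.refl (Q : ElemCube d) : IsFace Q Q := fun i => ⟨le_rfl, le_rfl⟩

lemma boundaryCube_supp (Q : ElemCube d) : boundaryCube d Q ∈
    Finsupp.supported ℤ ℤ {R : ElemCube d | cubeDim R + 1 = cubeDim Q ∧ IsFace R Q} := by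
  induction d with
  | zero => simp [boundaryCube]
  | succ d ih =>
    rw [boundaryCube_succ]
    have hQ : Q = Fin.cons (Q 0) (fun i => Q i.succ) := (Fin.cons_self_tail Q).symm
    set a := Q 0 with ha
    set R := fun i => Q (Fin.succ i) with hR
    rw [hQ]
    refine Submodule.add_mem _ ?_ (Submodule.smul_mem _ _ ?_)
    · split_ifs with h
      · refine Submodule.sub_mem _ ?_ ?_ <;> apply Finsupp.single_mem_supported
        · refine ⟨?_, fun i => ?_⟩
          · simp [cubeDim_cons, h, add_comm]
          · refine Fin.cases ?_ (fun i => ?_) i <;> simp [h]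
        · refine ⟨?_, fun i => ?_⟩
          · simp [cubeDim_cons, h, add_comm]
          · refine Fin.cases ?_ (fun i => ?_) i <;> simp [h]
      · exact Submodule.zero_mem _
    · rw [Finsupp.mem_supported]
      intro T hT
      have hT' := Finsupp.mapDomain_support (by exact hT)
      rw [Finset.mem_image] at hT'
      obtain ⟨S, hS, rfl⟩ := hT'
      have := (Finsupp.mem_supported _ _).1 (ih R) hS
      obtain ⟨h1, h2⟩ := this
      refine ⟨?_, fun i => ?_⟩
      · rw [cubeDim_cons, cubeDim_cons, add_assoc, h1]
      · refine Fin.cases ?_ (fun i => ?_) i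
        · simp
        · simpa using h2 i

lemma boundaryHom_cons (a : ℤ × Bool) (c : CubChain d) :
    boundaryHom (d + 1) (Finsupp.mapDomain (Fin.cons a) c) =
      (if a.2 then Finsupp.mapDomain (Fin.cons (a.1 + 1, false)) c -
        Finsupp.mapDomain (Fin.cons (a.1, false)) c else 0) +
      (if a.2 then (-1 : ℤ) else 1) • Finsupp.mapDomain (Fin.cons a) (boundaryHom d c) := by
  induction c using Finsupp.induction_linear with
  | zero => simp
  | add f g hf hg =>
    simp only [Finsupp.mapDomain_add, map_add, hf, hg]
    split_ifs <;> module
  | single R n =>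
    simp only [Finsupp.mapDomain_single, boundaryHom_single, boundaryCube_succ, Fin.cons_zero,
      Fin.cons_succ, Finsupp.mapDomain_smul]
    split_ifs
    · simp only [smul_add, smul_sub, Finsupp.smul_single, smul_eq_mul, mul_one]
      module
    · simp

lemma boundaryHom_boundaryCube (Q : ElemCube d) : boundaryHom d (boundaryCube d Q) = 0 := by
  induction d with
  | zero => simp [boundaryCube]
  | succ d ih =>
    have hs : ∀ a : ℤ × Bool, Finsupp.single (Fin.cons a (fun i => Q i.succ) : ElemCube (d + 1))
        (1 : ℤ) = Finsupp.mapDomain (Fin.cons a) (Finsupp.single (fun i => Q i.succ) 1) := by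
      intro a; rw [Finsupp.mapDomain_single]
    rw [boundaryCube_succ]
    split_ifs with h
    · rw [hs, hs, map_add, map_sub, map_smul, boundaryHom_cons, boundaryHom_cons, boundaryHom_cons]
      simp [h, ih, boundaryHom_single]
    · rw [map_add, map_smul, boundaryHom_cons]
      simp [h, ih]

lemma translate_cons (x : Fin (d + 1) → ℤ) (a : ℤ × Bool) (R : ElemCube d) :
    translateCube x (Fin.cons a R) =
      Fin.cons (a.1 + x 0, a.2) (translateCube (fun i => x i.succ) R) := by
  funext i
  refine Fin.cases ?_ (fun i => ?_) i <;> simp [translateCube]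

lemma boundaryCube_translate (x : Fin d → ℤ) (Q : ElemCube d) :
    boundaryCube d (translateCube x Q) =
      Finsupp.mapDomain (translateCube x) (boundaryCube d Q) := by
  induction d with
  | zero => simp [boundaryCube]
  | succ d ih =>
    have hQ : Q = Fin.cons (Q 0) (fun i => Q i.succ) := (Fin.cons_self_tail Q).symm
    set a := Q 0 with ha
    set R := fun i => Q (Fin.succ i) with hR
    rw [hQ, translate_cons, boundaryCube_succ, boundaryCube_succ]
    simp only [Fin.cons_zero, Fin.cons_succ]
    rw [Finsupp.mapDomain_add, Finsupp.mapDomain_smul, ← Finsupp.mapDomain_comp, ih,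
      ← Finsupp.mapDomain_comp]
    congr 1
    · split_ifs
      · have : ∀ f g : CubChain (d + 1), Finsupp.mapDomain (translateCube x) (f - g) =
            Finsupp.mapDomain (translateCube x) f - Finsupp.mapDomain (translateCube x) g :=
          fun f g => map_sub (Finsupp.mapDomain.addMonoidHom (translateCube x)) f g
        rw [this, Finsupp.mapDomain_single, Finsupp.mapDomain_single, translate_cons,
          translate_cons]
        simp only
        rw [add_right_comm]
      · simp
    · congr 2
      funext S
      simp only [Function.comp]
      rw [translate_cons]

lemma dep_translate (x : Fin d → ℤ) (Q : ElemCube d) (S : Set (ElemCube d)) :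
    Dep (boundaryCube d Q) (Submodule.span ℤ (boundaryCube d '' S)) →
    Dep (boundaryCube d (translateCube x Q))
      (Submodule.span ℤ (boundaryCube d '' (translateCube x '' S))) := by
  rintro ⟨n, h0, hn⟩
  refine ⟨n, h0, ?_⟩
  have : boundaryCube d '' (translateCube x '' S) =
      Finsupp.lmapDomain ℤ ℤ (translateCube x) '' (boundaryCube d '' S) := by
    rw [Set.image_image, Set.image_image]
    exact Set.image_congr fun R _ => boundaryCube_translate x R
  rw [this, ← Submodule.map_span, boundaryCube_translate]
  refine ⟨_, hn, ?_⟩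
  simp [Finsupp.mapDomain_smul]

/-- cubes of dimension k in X -/
def cubesOf (d k : ℕ) (X : Set (Fin d → ℝ)) : Set (ElemCube d) :=
  {Q : ElemCube d | cubeDim Q = k ∧ cubeSet Q ⊆ X}

lemma map_chainsOn (k : ℕ) (X : Set (Fin d → ℝ)) :
    Submodule.map (boundaryHom d) (chainsOn d k X) =
      Submodule.span ℤ (boundaryCube d '' cubesOf d k X) := by
  rw [chainsOn, Finsupp.supported_eq_span_single, Submodule.map_span, Set.image_image]
  simp [boundaryHom_single, cubesOf]

lemma cubeSet_mono {Q Q' : ElemCube d} (h : IsFace Q Q') : cubeSet Q ⊆ cubeSet Q' := by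
  intro x hx i
  have h1 := hx i
  have h2 := h i
  have a1 : ((Q' i).1 : ℝ) ≤ (Q i).1 := by exact_mod_cast h2.1
  have a2 : ((Q i).1 : ℝ) + (if (Q i).2 then 1 else 0) ≤
      (Q' i).1 + (if (Q' i).2 then 1 else 0) := by
    have := h2.2
    split_ifs at this ⊢ <;> exact_mod_cast this
  exact ⟨a1.trans h1.1, h1.2.trans a2⟩

lemma betti_formula (q : ℕ) (X : Set (Fin d → ℝ)) (h1 : (cubesOf d q X).Finite)
    (h2 : (cubesOf d (q + 1) X).Finite) :
    betti d q X + rk (cubesOf d q X) + rk (cubesOf d (q + 1) X) = (cubesOf d q X).ncard := by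
  have : Finite (cubesOf d q X) := h1
  have hC : Module.finrank ℤ (chainsOn d q X) = (cubesOf d q X).ncard := by
    show Module.finrank ℤ (Finsupp.supported ℤ ℤ (cubesOf d q X)) = _
    rw [(Finsupp.supportedEquivFinsupp (M := ℤ) (R := ℤ) (cubesOf d q X)).finrank_eq]
    have := Fintype.ofFinite (cubesOf d q X)
    rw [Module.finrank_finsupp_self, ← Nat.card_eq_fintype_card, Nat.card_coe_set_eq]
  have hfin : Module.Finite ℤ (chainsOn d q X) :=
    Module.Finite.equiv (Finsupp.supportedEquivFinsupp (M := ℤ) (R := ℤ) (cubesOf d q X)).symm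
  have hZle : cycleMod d q X ≤ chainsOn d q X := inf_le_left
  have hfinZ : Module.Finite ℤ (cycleMod d q X) :=
    Module.Finite.of_injective (Submodule.inclusion hZle) (Submodule.inclusion_injective _)
  have hBZ : boundaryMod d q X ≤ cycleMod d q X := by
    rw [boundaryMod, map_chainsOn, Submodule.span_le]
    rintro _ ⟨Q, ⟨hQ1, hQ2⟩, rfl⟩
    refine ⟨?_, boundaryHom_boundaryCube Q⟩
    refine Finsupp.supported_mono ?_ (boundaryCube_supp Q)
    rintro R ⟨hR1, hR2⟩
    exact ⟨by omega, (cubeSet_mono hR2).trans hQ2⟩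
  have e1 := Submodule.finrank_quotient_add_finrank
    ((boundaryMod d q X).comap (cycleMod d q X).subtype)
  rw [(Submodule.comapSubtypeEquivOfLe hBZ).finrank_eq] at e1
  have e2 : Module.finrank ℤ (boundaryMod d q X) = rk (cubesOf d (q + 1) X) := by
    rw [boundaryMod, map_chainsOn, rk]
  set f := (boundaryHom d).domRestrict (chainsOn d q X) with hf
  have e3 := Submodule.finrank_quotient_add_finrank (LinearMap.ker f)
  have e4 : Module.finrank ℤ (chainsOn d q X ⧸ LinearMap.ker f) = rk (cubesOf d q X) := by
    rw [f.quotKerEquivRange.finrank_eq, hf, LinearMap.range_domRestrict, map_chainsOn, rk]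
  have e5 : Module.finrank ℤ (LinearMap.ker f) = Module.finrank ℤ (cycleMod d q X) := by
    have : LinearMap.ker f = (cycleMod d q X).comap (chainsOn d q X).subtype := by
      ext x
      simp [hf, cycleMod]
    rw [this, (Submodule.comapSubtypeEquivOfLe hZle).finrank_eq]
  rw [betti]
  omega

end Alg

section Geo
variable {d : ℕ}

/-- the cube is contained in the random set -/
def Pres (ω : Config d) (t : ℝ) (Q : ElemCube d) : Prop := cubeSet Q ⊆ cubSet ω t

lemma pres_iff (ω : Config d) (t : ℝ) (Q : ElemCube d) :
    Pres ω t Q ↔ ∃ Q', IsFace Q Q' ∧ (ω Q' : ℝ) ≤ t := by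
  constructor
  · intro h
    have hc : (fun i => ((Q i).1 : ℝ) + (if (Q i).2 then 1 / 2 else 0)) ∈ cubeSet Q := by
      intro i
      simp only [Set.mem_Icc]
      split_ifs <;> constructor <;> linarith
    have h2 := h hc
    simp only [cubSet, Set.mem_iUnion, exists_prop] at h2
    obtain ⟨Q', hQ', hm⟩ := h2
    refine ⟨Q', fun i => ?_, hQ'⟩
    have hi := hm i
    simp only [Set.mem_Icc] at hi
    obtain ⟨ha, hb⟩ := hi
    constructor
    · have : ((Q' i).1 : ℝ) < (Q i).1 + 1 := by
        split_ifs at ha <;> linarith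
      have : (Q' i).1 < (Q i).1 + 1 := by exact_mod_cast this
      omega
    · split_ifs at hb ⊢ with h1 h2 h2
      · have : ((Q i).1 : ℝ) < (Q' i).1 + 1 := by linarith
        have : (Q i).1 < (Q' i).1 + 1 := by exact_mod_cast this
        omega
      · split_ifs at ha
        exfalso
        have e1 : ((Q i).1 : ℝ) < (Q' i).1 := by linarith
        have e2 : ((Q' i).1 : ℝ) < (Q i).1 + 1 := by linarith
        have e1' : (Q i).1 < (Q' i).1 := by exact_mod_cast e1
        have e2' : (Q' i).1 < (Q i).1 + 1 := by exact_mod_cast e2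
        omega
      · have : ((Q i).1 : ℝ) ≤ (Q' i).1 + 1 := by linarith
        have : (Q i).1 ≤ (Q' i).1 + 1 := by exact_mod_cast this
        omega
      · have : ((Q i).1 : ℝ) ≤ (Q' i).1 := by linarith
        have : (Q i).1 ≤ (Q' i).1 := by exact_mod_cast this
        omega
  · rintro ⟨Q', h1, h2⟩
    refine (cubeSet_mono h1).trans ?_
    exact Set.subset_biUnion_of_mem (u := cubeSet) (s := {Q : ElemCube d | (ω Q : ℝ) ≤ t}) h2

lemma finite_cofaces (Q : ElemCube d) : {Q' | IsFace Q Q'}.Finite := by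
  refine (Set.Finite.pi (t := fun i => Set.Icc ((Q i).1 - 1) (Q i).1 ×ˢ (Set.univ : Set Bool))
    (fun i => (Set.finite_Icc _ _).prod Set.finite_univ)).subset ?_
  intro Q' h i _
  have h := h i
  refine ⟨⟨?_, h.1⟩, trivial⟩
  have := h.2
  split_ifs at this <;> omega

lemma cubeSet_subset_lambda (Q : ElemCube d) (n : ℕ) :
    cubeSet Q ⊆ lambda d n ↔ ∀ i, -(n : ℤ) ≤ (Q i).1 ∧
      (Q i).1 + (if (Q i).2 then 1 else 0) ≤ (n : ℤ) := by
  constructor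
  · intro h i
    have h1 : (fun i => ((Q i).1 : ℝ)) ∈ cubeSet Q := by
      intro i
      simp only [Set.mem_Icc]
      split_ifs <;> constructor <;> linarith
    have h2 : (fun i => ((Q i).1 : ℝ) + (if (Q i).2 then 1 else 0)) ∈ cubeSet Q := by
      intro i
      simp only [Set.mem_Icc]
      split_ifs <;> constructor <;> linarith
    have h1 := (h h1 i).1
    have h2 := (h h2 i).2
    constructor
    · exact_mod_cast h1
    · split_ifs at h2 ⊢ <;> exact_mod_cast h2
  · intro h x hx i
    have := hx i
    have h1 : -(n : ℝ) ≤ (Q i).1 := by exact_mod_cast (h i).1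
    have h2 : ((Q i).1 : ℝ) + (if (Q i).2 then 1 else 0) ≤ n := by
      have := (h i).2
      split_ifs at this ⊢ <;> exact_mod_cast this
    exact ⟨h1.trans this.1, this.2.trans h2⟩

/-- cubes with base point in the half open box -/
def C0 (d k n : ℕ) : Finset (ElemCube d) :=
  (Fintype.piFinset fun _ => Finset.Ico (-(n : ℤ)) n ×ˢ (Finset.univ : Finset Bool)).filter
    fun Q => cubeDim Q = k

/-- cubes in the closed box -/
def CC (d k n : ℕ) : Finset (ElemCube d) :=
  (Fintype.piFinset fun _ => Finset.Icc (-(n : ℤ)) n ×ˢ (Finset.univ : Finset Bool)).filter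
    fun Q => cubeDim Q = k ∧ ∀ i, (Q i).1 + (if (Q i).2 then 1 else 0) ≤ (n : ℤ)

lemma mem_C0 {k n : ℕ} {Q : ElemCube d} :
    Q ∈ C0 d k n ↔ cubeDim Q = k ∧ ∀ i, -(n : ℤ) ≤ (Q i).1 ∧ (Q i).1 < n := by
  simp [C0, Fintype.mem_piFinset, and_comm]

lemma mem_CC {k n : ℕ} {Q : ElemCube d} :
    Q ∈ CC d k n ↔ cubeDim Q = k ∧ cubeSet Q ⊆ lambda d n := by
  rw [cubeSet_subset_lambda]
  simp only [CC, Finset.mem_filter, Fintype.mem_piFinset, Finset.mem_product, Finset.mem_Icc,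
    Finset.mem_univ, and_true]
  constructor
  · rintro ⟨h1, h2, h3⟩
    exact ⟨h2, fun i => ⟨(h1 i).1, h3 i⟩⟩
  · rintro ⟨h2, h3⟩
    refine ⟨fun i => ⟨(h3 i).1, ?_⟩, h2, fun i => (h3 i).2⟩
    have := (h3 i).2
    split_ifs at this <;> omega

lemma C0_subset_CC (k n : ℕ) : C0 d k n ⊆ CC d k n := by
  intro Q hQ
  rw [mem_C0] at hQ
  rw [mem_CC, cubeSet_subset_lambda]
  refine ⟨hQ.1, fun i => ⟨(hQ.2 i).1, ?_⟩⟩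
  have := (hQ.2 i).2
  split_ifs <;> omega

lemma CC_subset_C0 (k n : ℕ) : CC d k n ⊆ C0 d k (n + 1) := by
  intro Q hQ
  rw [mem_CC, cubeSet_subset_lambda] at hQ
  rw [mem_C0]
  refine ⟨hQ.1, fun i => ?_⟩
  have := hQ.2 i
  split_ifs at this <;> push_cast <;> omega

/-- types of cubes -/
def tys (d k : ℕ) : Finset (Fin d → Bool) :=
  Finset.univ.filter fun b => (Finset.univ.filter fun i => b i = true).card = k

/-- cube from base point and type -/
def mkc (x : Fin d → ℤ) (b : Fin d → Bool) : ElemCube d := fun i => (x i, b i)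

lemma sum_C0 (k n : ℕ) (f : ElemCube d → ℝ) :
    ∑ Q ∈ C0 d k n, f Q = ∑ b ∈ tys d k, ∑ x ∈ Bx d n, f (mkc x b) := by
  rw [← Finset.sum_product']
  refine Finset.sum_nbij' (fun Q => (fun i => (Q i).2, fun i => (Q i).1))
    (fun p => mkc p.2 p.1) ?_ ?_ ?_ ?_ ?_
  · intro Q hQ
    rw [mem_C0] at hQ
    simp only [Finset.mem_product, tys, Bx, Finset.mem_filter, Finset.mem_univ, true_and,
      Fintype.mem_piFinset, Finset.mem_Ico]
    exact hQ
  · intro p hp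
    rw [mem_C0]
    simp only [Finset.mem_product, tys, Bx, Finset.mem_filter, Finset.mem_univ, true_and,
      Fintype.mem_piFinset, Finset.mem_Ico] at hp
    exact hp
  · intro Q _; rfl
  · intro p _; rfl
  · intro Q _; rfl

lemma card_C0 (k n : ℕ) : ((C0 d k n).card : ℝ) = (tys d k).card * (2 * (n : ℝ)) ^ d := by
  have := sum_C0 (d := d) k n (fun _ => 1)
  simp only [Finset.sum_const, nsmul_eq_mul, mul_one, card_Bx] at this
  exact this

/-- present cubes in the box -/
def SS (ω : Config d) (t : ℝ) (k n : ℕ) : Finset (ElemCube d) := by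
  classical exact (CC d k n).filter fun Q => Pres ω t Q

lemma mem_SS {ω : Config d} {t : ℝ} {k n : ℕ} {Q : ElemCube d} :
    Q ∈ SS ω t k n ↔ Q ∈ CC d k n ∧ Pres ω t Q := by
  classical
  simp [SS]

lemma cubesOf_eq (ω : Config d) (t : ℝ) (k n : ℕ) :
    cubesOf d k (cubSet ω t ∩ lambda d n) = (SS ω t k n : Set (ElemCube d)) := by
  ext Q
  rw [Finset.mem_coe, mem_SS, mem_CC]
  simp only [cubesOf, Set.mem_ofPred_eq, Set.subset_inter_iff, Pres]
  tauto

lemma bettiN_formula (q n : ℕ) (ω : Config d) (t : ℝ) :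
    (bettiN d q n t ω : ℝ) = (SS ω t q n).card - rk (SS ω t q n : Set (ElemCube d))
      - rk (SS ω t (q + 1) n : Set (ElemCube d)) := by
  have h := betti_formula q (cubSet ω t ∩ lambda d n)
    (by rw [cubesOf_eq]; exact Finset.finite_toSet _)
    (by rw [cubesOf_eq]; exact Finset.finite_toSet _)
  rw [cubesOf_eq, cubesOf_eq, Set.ncard_coe_finset] at h
  have h' : ((bettiN d q n t ω + rk (SS ω t q n : Set (ElemCube d))
      + rk (SS ω t (q + 1) n : Set (ElemCube d)) : ℕ) : ℝ) = ((SS ω t q n).card : ℕ) := by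
    rw [bettiN, h]
  push_cast at h'
  linarith

lemma trc_trc (x y : Fin d → ℤ) (Q : ElemCube d) :
    translateCube x (translateCube y Q) = translateCube (x + y) Q := by
  funext i
  simp only [translateCube, Pi.add_apply]
  rw [add_assoc, add_comm (y i)]

lemma trc_zero (Q : ElemCube d) : translateCube 0 Q = Q := by
  funext i
  simp [translateCube]

lemma shift_zero (ω : Config d) : configShift 0 ω = ω := by
  funext Q
  simp only [configShift, neg_zero, trc_zero]

lemma shift_add (x y : Fin d → ℤ) (ω : Config d) :
    configShift (x + y) ω = configShift x (configShift y ω) := by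
  funext Q
  simp only [configShift, trc_trc]
  rw [neg_add, add_comm]

lemma shift_meas (x : Fin d → ℤ) : Measurable (configShift x : Config d → Config d) :=
  measurable_pi_lambda _ fun _ => measurable_pi_apply _

lemma shift_mp {P : Measure (Config d)} (hstat : Stationary P) (x : Fin d → ℤ) :
    MeasurePreserving (configShift x) P P := by
  refine ⟨shift_meas x, ?_⟩
  ext A hA
  rw [Measure.map_apply (shift_meas x) hA, hstat x A hA]

lemma shift_translate (x : Fin d → ℤ) (Q : ElemCube d) (ω : Config d) :
    configShift x ω (translateCube x Q) = ω Q := by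
  simp only [configShift, trc_trc, neg_add_cancel, trc_zero]

lemma conv {P : Measure (Config d)} [IsProbabilityMeasure P]
    (hstat : Stationary P) (herg : ErgodicConfig P)
    (H : ElemCube d → Config d → ℝ) (hm : ∀ Q, Measurable (H Q)) (hb : ∀ Q ω, |H Q ω| ≤ 1)
    (hcov : ∀ x Q ω, H (translateCube x Q) (configShift x ω) = H Q ω) (k : ℕ) :
    ∀ᵐ ω ∂P, Tendsto (fun n : ℕ => ((2 * (n : ℝ)) ^ d)⁻¹ * ∑ Q ∈ CC d k n, H Q ω) atTop
      (𝓝 (∑ b ∈ tys d k, ∫ ω, H (mkc 0 b) ω ∂P)) := by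
  have hw : ∀ b, ∀ᵐ ω ∂P, Tendsto (fun n : ℕ => ((2 * (n : ℝ)) ^ d)⁻¹ *
      ∑ x ∈ Bx d n, H (mkc 0 b) (configShift (-x) ω)) atTop
      (𝓝 (∫ ω, H (mkc 0 b) ω ∂P)) := fun b =>
    wiener (φ := fun x => configShift (-x)) (fun x => shift_mp hstat (-x))
      (fun ω => by simp [shift_zero])
      (fun x y ω => by rw [neg_add]; exact shift_add _ _ _)
      (fun A hA h => herg A hA (fun x => by simpa using h (-x)))
      _ 1 (hm _) (hb _)
  filter_upwards [ae_all_iff.2 hw] with ω hω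
  have h1 := tendsto_finset_sum (tys d k) (fun b _ => hω b)
  have h2 := ratio_lim' d 1 ((tys d k).card)
  have h3 : Tendsto (fun n : ℕ => ((2 * (n : ℝ)) ^ d)⁻¹ * ∑ Q ∈ CC d k n, H Q ω -
      ∑ b ∈ tys d k, ((2 * (n : ℝ)) ^ d)⁻¹ *
      ∑ x ∈ Bx d n, H (mkc 0 b) (configShift (-x) ω)) atTop (𝓝 0) := by
    refine squeeze_zero_norm (fun n => ?_) h2
    have e : ∑ b ∈ tys d k, ((2 * (n : ℝ)) ^ d)⁻¹ *
        ∑ x ∈ Bx d n, H (mkc 0 b) (configShift (-x) ω) =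
        ((2 * (n : ℝ)) ^ d)⁻¹ * ∑ Q ∈ C0 d k n, H Q ω := by
      rw [sum_C0, Finset.mul_sum]
      refine Finset.sum_congr rfl fun b _ => ?_
      congr 1
      refine Finset.sum_congr rfl fun x _ => ?_
      rw [← hcov (-x) (mkc x b) ω]
      congr 1
      funext i
      simp [translateCube, mkc]
    rw [e, ← mul_sub, norm_mul, Real.norm_of_nonneg (by positivity), Real.norm_eq_abs]
    refine mul_le_mul_of_nonneg_left ?_ (by positivity)
    have a1 := abs_sum_sub_le (C0_subset_CC (d := d) k n) (F := fun Q => H Q ω) (C := 1)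
      (fun Q => hb Q ω)
    have a2 : ((CC d k n).card : ℝ) ≤ (C0 d k (n + 1)).card := by
      exact_mod_cast Finset.card_le_card (CC_subset_C0 (d := d) k n)
    rw [card_C0] at a1 a2
    have : (((n + 1 : ℕ)) : ℝ) = (n + 1 : ℕ) := rfl
    linarith
  simpa using h3.add h1

end Geo

section Rank
variable {d : ℕ}

/-- window of earlier present cubes -/
def TT (ω : Config d) (t : ℝ) (m : ℕ∞) (Q : ElemCube d) : Set (ElemCube d) :=
  {Q' | cubeDim Q' = cubeDim Q ∧ ckey Q' < ckey Q ∧ Pres ω t Q' ∧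
    ∀ i, ((((Q' i).1 - (Q i).1).natAbs : ℕ) : ℕ∞) ≤ m}

/-- dependence on the window -/
def DD (ω : Config d) (t : ℝ) (m : ℕ∞) (Q : ElemCube d) : Prop :=
  Dep (boundaryCube d Q) (Submodule.span ℤ (boundaryCube d '' TT ω t m Q))

open Classical in
/-- local rank contribution -/
def GG (t : ℝ) (m : ℕ∞) (Q : ElemCube d) (ω : Config d) : ℝ :=
  if Pres ω t Q ∧ ¬ DD ω t m Q then 1 else 0

lemma GG_bd (t : ℝ) (m : ℕ∞) (Q : ElemCube d) (ω : Config d) : |GG t m Q ω| ≤ 1 := by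
  unfold GG; split_ifs <;> simp

lemma pres_meas (t : ℝ) (Q : ElemCube d) : MeasurableSet {ω : Config d | Pres ω t Q} := by
  have : {ω : Config d | Pres ω t Q} =
      ⋃ Q' : ElemCube d, ⋃ _ : IsFace Q Q', {ω : Config d | (ω Q' : ℝ) ≤ t} := by
    ext ω
    simp [pres_iff]
  rw [this]
  refine MeasurableSet.iUnion fun Q' => MeasurableSet.iUnion fun _ => ?_
  exact measurableSet_le (measurable_subtype_coe.comp (measurable_pi_apply Q')) measurable_const

lemma dep_fin (v : CubChain d) (S : Set (ElemCube d))
    (h : Dep v (Submodule.span ℤ (boundaryCube d '' S))) :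
    ∃ F : Finset (ElemCube d), (F : Set (ElemCube d)) ⊆ S ∧
      Dep v (Submodule.span ℤ (boundaryCube d '' (F : Set (ElemCube d)))) := by
  classical
  obtain ⟨n, h0, hn⟩ := h
  obtain ⟨T, hT, hx⟩ := Submodule.mem_span_finite_of_mem_span hn
  obtain ⟨F, hF, rfl⟩ := Finset.subset_set_image_iff.1 hT
  refine ⟨F, hF, n, h0, ?_⟩
  rwa [Finset.coe_image] at hx

lemma dep_sub {v : CubChain d} {S S' : Set (ElemCube d)} (hS : S ⊆ S')
    (h : Dep v (Submodule.span ℤ (boundaryCube d '' S))) :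
    Dep v (Submodule.span ℤ (boundaryCube d '' S')) :=
  h.mono (Submodule.span_mono (Set.image_mono hS))

lemma DD_meas (t : ℝ) (m : ℕ∞) (Q : ElemCube d) : MeasurableSet {ω : Config d | DD ω t m Q} := by
  have : {ω : Config d | DD ω t m Q} =
      ⋃ F : Finset (ElemCube d), ⋃ _ : Dep (boundaryCube d Q)
        (Submodule.span ℤ (boundaryCube d '' (F : Set (ElemCube d)))),
        ⋂ Q' ∈ F, {ω : Config d | Q' ∈ TT ω t m Q} := by
    ext ω
    simp only [Set.mem_ofPred_eq, Set.mem_iUnion, Set.mem_iInter, exists_prop]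
    constructor
    · intro h
      obtain ⟨F, h1, h2⟩ := dep_fin _ _ h
      exact ⟨F, h2, fun Q' hQ' => h1 hQ'⟩
    · rintro ⟨F, h1, h2⟩
      exact dep_sub h2 h1
  rw [this]
  refine MeasurableSet.iUnion fun F => MeasurableSet.iUnion fun _ =>
    Finset.measurableSet_biInter F fun Q' _ => ?_
  by_cases h : cubeDim Q' = cubeDim Q ∧ ckey Q' < ckey Q ∧
    ∀ i, ((((Q' i).1 - (Q i).1).natAbs : ℕ) : ℕ∞) ≤ m
  · convert pres_meas t Q' using 1
    ext ω
    simp only [TT, Set.mem_ofPred_eq]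
    tauto
  · convert MeasurableSet.empty using 1
    ext ω
    simp only [TT, Set.mem_ofPred_eq, Set.mem_empty_iff_false, iff_false]
    tauto

lemma GG_meas (t : ℝ) (m : ℕ∞) (Q : ElemCube d) : Measurable (GG t m Q) := by
  unfold GG
  exact Measurable.ite ((pres_meas t Q).inter (DD_meas t m Q).compl) measurable_const
    measurable_const

lemma isFace_tr (x : Fin d → ℤ) {Q Q' : ElemCube d} (h : IsFace Q Q') :
    IsFace (translateCube x Q) (translateCube x Q') := by
  intro i
  have := h i
  obtain ⟨h1, h2⟩ := this
  refine ⟨add_le_add_left h1 _, ?_⟩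
  simp only [translateCube]
  rw [add_right_comm, add_right_comm (Q' i).1]
  exact add_le_add_left h2 _

lemma pres_tr (x : Fin d → ℤ) {ω : Config d} {t : ℝ} {Q : ElemCube d} (h : Pres ω t Q) :
    Pres (configShift x ω) t (translateCube x Q) := by
  rw [pres_iff] at h ⊢
  obtain ⟨Q', h1, h2⟩ := h
  exact ⟨translateCube x Q', isFace_tr x h1, by rw [shift_translate]; exact h2⟩

lemma dim_tr (x : Fin d → ℤ) (Q : ElemCube d) : cubeDim (translateCube x Q) = cubeDim Q := rfl

lemma DD_tr (x : Fin d → ℤ) {ω : Config d} {t : ℝ} {m : ℕ∞} {Q : ElemCube d} (h : DD ω t m Q) :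
    DD (configShift x ω) t m (translateCube x Q) := by
  refine dep_sub ?_ (dep_translate x Q _ h)
  rintro _ ⟨Q', ⟨h1, h2, h3, h4⟩, rfl⟩
  refine ⟨h1, (ckey_translate x _ _).2 h2, pres_tr x h3, fun i => ?_⟩
  have := h4 i
  simpa [translateCube] using this

lemma shift_neg (x : Fin d → ℤ) (ω : Config d) : configShift (-x) (configShift x ω) = ω := by
  rw [← shift_add, neg_add_cancel, shift_zero]

lemma tr_neg (x : Fin d → ℤ) (Q : ElemCube d) : translateCube (-x) (translateCube x Q) = Q := by
  rw [trc_trc, neg_add_cancel, trc_zero]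

lemma pres_tr_iff (x : Fin d → ℤ) {ω : Config d} {t : ℝ} {Q : ElemCube d} :
    Pres (configShift x ω) t (translateCube x Q) ↔ Pres ω t Q := by
  refine ⟨fun h => ?_, pres_tr x⟩
  have := pres_tr (-x) h
  rwa [shift_neg, tr_neg] at this

lemma DD_tr_iff (x : Fin d → ℤ) {ω : Config d} {t : ℝ} {m : ℕ∞} {Q : ElemCube d} :
    DD (configShift x ω) t m (translateCube x Q) ↔ DD ω t m Q := by
  refine ⟨fun h => ?_, DD_tr x⟩
  have := DD_tr (-x) h
  rwa [shift_neg, tr_neg] at this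

lemma GG_cov (t : ℝ) (m : ℕ∞) (x : Fin d → ℤ) (Q : ElemCube d) (ω : Config d) :
    GG t m (translateCube x Q) (configShift x ω) = GG t m Q ω := by
  unfold GG
  rw [pres_tr_iff, DD_tr_iff]

lemma GG_ev (t : ℝ) (Q : ElemCube d) (ω : Config d) :
    ∀ᶠ m : ℕ in atTop, GG t m Q ω = GG t ⊤ Q ω := by
  by_cases h : DD ω t ⊤ Q
  · obtain ⟨F, h1, h2⟩ := dep_fin _ _ h
    filter_upwards [eventually_ge_atTop
      (∑ Q' ∈ F, ∑ i, ((Q' i).1 - (Q i).1).natAbs)] with m hm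
    have : DD ω t m Q := by
      refine dep_sub (fun Q' hQ' => ?_) h2
      obtain ⟨a, b, c, _⟩ := h1 hQ'
      refine ⟨a, b, c, fun i => ?_⟩
      have e1 := Finset.single_le_sum (f := fun i => ((Q' i).1 - (Q i).1).natAbs)
        (fun i _ => Nat.zero_le _) (Finset.mem_univ i)
      have e2 := Finset.single_le_sum (f := fun Q' : ElemCube d =>
        ∑ i, ((Q' i).1 - (Q i).1).natAbs) (fun i _ => Nat.zero_le _) hQ'
      exact_mod_cast e1.trans (e2.trans hm)
    unfold GG
    simp [h, this]
  · refine Eventually.of_forall fun m => ?_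
    have hsub : TT ω t m Q ⊆ TT ω t ⊤ Q := by
      rintro Q' ⟨a, b, c, _⟩
      exact ⟨a, b, c, by simp⟩
    have : ¬ DD ω t m Q := fun h' => h (dep_sub hsub h')
    show GG t m Q ω = GG t ⊤ Q ω
    unfold GG
    by_cases hp : Pres ω t Q
    · rw [if_pos ⟨hp, this⟩, if_pos ⟨hp, h⟩]
    · rw [if_neg (fun hh => hp hh.1), if_neg (fun hh => hp hh.1)]

lemma rk_lower (ω : Config d) (t : ℝ) (k n : ℕ) :
    ∑ Q ∈ CC d k n, GG t ⊤ Q ω ≤ rk (SS ω t k n : Set (ElemCube d)) := by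
  classical
  rw [rk_eq_sum]
  push_cast
  have hs : SS ω t k n ⊆ CC d k n := fun Q h => (mem_SS.1 h).1
  rw [← Finset.sum_subset hs]
  · refine Finset.sum_le_sum fun Q hQ => ?_
    unfold GG
    split_ifs with h1 h2
    · exfalso
      refine h1.2 (dep_sub ?_ h2)
      rintro Q' ⟨a, b⟩
      rw [mem_SS, mem_CC] at a hQ
      exact ⟨by rw [a.1.1, hQ.1.1], b, a.2, by simp⟩
    · simp
    · simp
    · simp
  · intro Q h1 h2
    unfold GG
    rw [if_neg]
    rintro ⟨h3, -⟩
    exact h2 (mem_SS.2 ⟨h1, h3⟩)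

lemma rk_upper (ω : Config d) (t : ℝ) (k n m : ℕ) :
    (rk (SS ω t k (n + m) : Set (ElemCube d)) : ℝ) ≤ ∑ Q ∈ CC d k (n + m), GG t m Q ω +
      ((CC d k (n + m)).card - (C0 d k n).card) := by
  classical
  have hsub : C0 d k n ⊆ CC d k (n + m) := by
    intro Q hQ
    apply C0_subset_CC
    rw [mem_C0] at hQ ⊢
    refine ⟨hQ.1, fun i => ?_⟩
    have := hQ.2 i
    push_cast
    omega
  have hcard : ((CC d k (n + m)).card : ℝ) - (C0 d k n).card =
      ∑ Q ∈ CC d k (n + m), if Q ∈ C0 d k n then 0 else 1 := by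
    have e1 : ∀ Q : ElemCube d, (if Q ∈ C0 d k n then (0 : ℝ) else 1) =
        1 - (if Q ∈ C0 d k n then (1 : ℝ) else 0) := fun Q => by split_ifs <;> simp
    simp_rw [e1]
    rw [Finset.sum_sub_distrib, Finset.sum_ite_mem, Finset.inter_eq_right.2 hsub]
    simp
  rw [hcard, ← Finset.sum_add_distrib, rk_eq_sum]
  push_cast
  have hs : SS ω t k (n + m) ⊆ CC d k (n + m) := fun Q h => (mem_SS.1 h).1
  have hnn : ∀ Q, 0 ≤ GG t m Q ω := fun Q => by unfold GG; split_ifs <;> simp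
  refine le_trans (Finset.sum_le_sum fun Q hQ => ?_)
    (Finset.sum_le_sum_of_subset_of_nonneg hs fun Q _ _ => ?_)
  · by_cases hC : Q ∈ C0 d k n
    · rw [if_pos hC, add_zero]
      have hp := (mem_SS.1 hQ).2
      unfold GG
      split_ifs with h1 h2 h2
      · exact zero_le_one
      · exact le_rfl
      · exact le_rfl
      · exfalso
        have h3 : DD ω t m Q := by
          by_contra h3
          exact h2 ⟨hp, h3⟩
        refine h1 (dep_sub ?_ h3)
        rintro Q' ⟨a, b, c, e⟩
        refine ⟨mem_SS.2 ⟨C0_subset_CC _ _ ?_, c⟩, b⟩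
        rw [mem_C0] at hC ⊢
        refine ⟨a.trans hC.1, fun i => ?_⟩
        have e1 : ((Q' i).1 - (Q i).1).natAbs ≤ m := by exact_mod_cast e i
        have e2 := hC.2 i
        push_cast
        omega
    · rw [if_neg hC]
      have := hnn Q
      split_ifs <;> linarith
  · have := hnn Q
    split_ifs <;> linarith

lemma rk_conv {P : Measure (Config d)} [IsProbabilityMeasure P]
    (hstat : Stationary P) (herg : ErgodicConfig P) (t : ℝ) (k : ℕ) :
    ∃ g : ℝ, ∀ᵐ ω ∂P, Tendsto (fun n : ℕ => ((2 * (n : ℝ)) ^ d)⁻¹ *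
      (rk (SS ω t k n : Set (ElemCube d)) : ℝ)) atTop (𝓝 g) := by
  have hc : ∀ m : ℕ∞, _ := fun m => conv hstat herg (GG t m) (GG_meas t m) (GG_bd t m)
    (GG_cov t m) k
  refine ⟨∑ b ∈ tys d k, ∫ ω, GG t ⊤ (mkc 0 b) ω ∂P, ?_⟩
  have hlim : Tendsto (fun m : ℕ => ∑ b ∈ tys d k, ∫ ω, GG t m (mkc 0 b) ω ∂P) atTop
      (𝓝 (∑ b ∈ tys d k, ∫ ω, GG t ⊤ (mkc 0 b) ω ∂P)) := by
    refine tendsto_finset_sum _ fun b _ => ?_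
    refine tendsto_integral_of_dominated_convergence (fun _ => 1)
      (fun m => (GG_meas t m _).aestronglyMeasurable) (integrable_const _)
      (fun m => Eventually.of_forall fun ω => GG_bd t m _ ω) (Eventually.of_forall fun ω => ?_)
    exact tendsto_const_nhds.congr' ((GG_ev t (mkc 0 b) ω).mono fun m h => h.symm)
  filter_upwards [hc ⊤, ae_all_iff.2 fun m : ℕ => hc m] with ω h1 h2
  rw [tendsto_order]
  constructor
  · intro a ha
    filter_upwards [(tendsto_order.1 h1).1 a ha] with n hn
    refine hn.trans_le (mul_le_mul_of_nonneg_left (rk_lower ω t k n) (by positivity))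
  · intro a ha
    obtain ⟨m, hm⟩ := ((tendsto_order.1 hlim).2 a ha).exists
    have h3 := (tendsto_add_atTop_iff_nat m).2 (h2 m)
    have h4 := h3.add (ratio_lim' d (m + 1) ((tys d k).card))
    rw [add_zero] at h4
    have h5 := (tendsto_order.1 h4).2 a hm
    rw [← map_add_atTop_eq_nat m, eventually_map]
    filter_upwards [h5, eventually_ge_atTop 1] with n hn hn1
    refine lt_of_le_of_lt ?_ hn
    have hpos : (0 : ℝ) < 2 * n := by
      have : (1 : ℝ) ≤ n := by exact_mod_cast hn1
      linarith
    have e1 := mul_le_mul_of_nonneg_left (rk_upper ω t k n m)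
      (by positivity : 0 ≤ ((2 * ((n + m : ℕ) : ℝ)) ^ d)⁻¹)
    rw [mul_add] at e1
    refine e1.trans (add_le_add le_rfl ?_)
    have a2 : ((CC d k (n + m)).card : ℝ) ≤ (C0 d k (n + m + 1)).card := by
      exact_mod_cast Finset.card_le_card (CC_subset_C0 (d := d) k (n + m))
    rw [card_C0] at a2 ⊢
    have e2 : ((CC d k (n + m)).card : ℝ) - (tys d k).card * (2 * (n : ℝ)) ^ d ≤
      (tys d k).card * ((2 * ((n + (m + 1) : ℕ) : ℝ)) ^ d - (2 * (n : ℝ)) ^ d) := by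
      rw [mul_sub]
      exact sub_le_sub_right a2 _
    have e3 : (0 : ℝ) ≤ (tys d k).card * ((2 * ((n + (m + 1) : ℕ) : ℝ)) ^ d - (2 * (n : ℝ)) ^ d) := by
      refine mul_nonneg (by positivity) (sub_nonneg.2 ?_)
      gcongr
      omega
    refine (mul_le_mul_of_nonneg_left e2 (by positivity)).trans
      (mul_le_mul_of_nonneg_right ?_ e3)
    gcongr
    omega

end Rank

section Fin1
variable {d : ℕ}

lemma unif_grid (f D : ℕ → ℝ → ℝ) (b Dl Ψ : ℝ → ℝ)
    (hinc : ∀ n s t, s ≤ t → |f n t - f n s| ≤ D n t - D n s)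
    (hbinc : ∀ s t, s ≤ t → |b t - b s| ≤ Dl t - Dl s)
    (hc : ContinuousOn Ψ (Set.Icc 0 1))
    (hΨ : ∀ s t, s ≤ t → Dl t - Dl s ≤ Ψ t - Ψ s)
    (hf : ∀ r : ℚ, Tendsto (fun n => f n r) atTop (𝓝 (b r)))
    (hD : ∀ r : ℚ, Tendsto (fun n => D n r) atTop (𝓝 (Dl r))) :
    Tendsto (fun n : ℕ => ⨆ t : Set.Icc (0 : ℝ) 1, |f n t - b t|) atTop (𝓝 0) := by
  have hu := isCompact_Icc.uniformContinuousOn_of_continuous hc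
  rw [Metric.uniformContinuousOn_iff] at hu
  rw [Metric.tendsto_atTop']
  intro ε hε
  obtain ⟨δ, hδ, hu⟩ := hu (ε / 6) (by positivity)
  obtain ⟨N, hN⟩ := exists_nat_one_div_lt hδ
  set M : ℕ := N + 1 with hM
  have hMpos : (0 : ℝ) < M := by positivity
  have h1 : ∀ᶠ n in atTop, ∀ j ∈ Finset.range (M + 1),
      |f n ((j / M : ℚ) : ℝ) - b ((j / M : ℚ) : ℝ)| < ε / 6 ∧
      |D n ((j / M : ℚ) : ℝ) - Dl ((j / M : ℚ) : ℝ)| < ε / 6 := by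
    rw [Filter.eventually_all_finset]
    intro j _
    have a1 := (Metric.tendsto_nhds.1 (hf (j / M : ℚ))) (ε / 6) (by positivity)
    have a2 := (Metric.tendsto_nhds.1 (hD (j / M : ℚ))) (ε / 6) (by positivity)
    filter_upwards [a1, a2] with n h1 h2
    exact ⟨by rwa [Real.dist_eq] at h1, by rwa [Real.dist_eq] at h2⟩
  rw [eventually_atTop] at h1
  obtain ⟨n0, h1⟩ := h1
  refine ⟨n0, fun n hn => ?_⟩
  have h1 := h1 n hn.le
  have hne : Nonempty (Set.Icc (0 : ℝ) 1) := ⟨⟨0, by simp⟩⟩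
  have hle : ⨆ t : Set.Icc (0 : ℝ) 1, |f n t - b t| ≤ 5 * ε / 6 := by
    refine ciSup_le fun t => ?_
    obtain ⟨t, ht0, ht1⟩ := t
    show |f n t - b t| ≤ _
    rcases Nat.eq_zero_or_pos ⌈t * M⌉₊ with h0 | hpos
    · rw [Nat.ceil_eq_zero] at h0
      have : t = 0 := by nlinarith
      have := (h1 0 (by simp)).1
      subst t
      simp at this
      linarith
    · obtain ⟨j, hj⟩ := Nat.exists_eq_succ_of_ne_zero hpos.ne'
      have hj1 : (j : ℝ) < t * M := by
        rw [← Nat.lt_ceil, hj]; exact Nat.lt_succ_self j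
      have hj2 : t * M ≤ ((j + 1 : ℕ) : ℝ) := by
        rw [← Nat.ceil_le, hj]
      have hjM : j + 1 ≤ M := by
        rw [← Nat.succ_eq_add_one, ← hj, Nat.ceil_le]
        nlinarith
      have A := h1 j (by simp; omega)
      have B := h1 (j + 1) (by simp; omega)
      set u : ℝ := ((j / M : ℚ) : ℝ) with hu'
      set v : ℝ := (((j + 1 : ℕ) / M : ℚ) : ℝ) with hv'
      have hue : u = j / M := by rw [hu']; push_cast; rfl
      have hve : v = (j + 1) / M := by rw [hv']; push_cast; rfl
      have hut : u ≤ t := by rw [hue, div_le_iff₀ hMpos]; exact hj1.le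
      have htv : t ≤ v := by rw [hve, le_div_iff₀ hMpos]; exact_mod_cast hj2
      have hu0 : 0 ≤ u := by rw [hue]; positivity
      have hv1 : v ≤ 1 := by rw [hve, div_le_one hMpos]; exact_mod_cast hjM
      have hvu : v - u < δ := by
        rw [hue, hve, ← sub_div, add_sub_cancel_left]
        rw [hM]; push_cast; exact hN
      have c1 := hu v ⟨hu0.trans (hut.trans htv), hv1⟩ u ⟨hu0, (hut.trans htv).trans hv1⟩
        (by rw [Real.dist_eq, abs_of_nonneg (by linarith)]; exact hvu)
      rw [Real.dist_eq] at c1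
      have c2 := (le_abs_self _).trans_lt c1
      have c3 := hΨ u v (hut.trans htv)
      have e1 := hinc n u t hut
      have e2 := (abs_nonneg _).trans (hinc n t v htv)
      have e3 := hbinc u t hut
      have e4 := (abs_nonneg _).trans (hbinc t v htv)
      rw [abs_le] at e1 e3 ⊢
      obtain ⟨A1, A2⟩ := A
      obtain ⟨B1, B2⟩ := B
      rw [abs_lt] at A1 A2 B1 B2
      constructor <;> linarith
  have hge : 0 ≤ ⨆ t : Set.Icc (0 : ℝ) 1, |f n t - b t| :=
    Real.iSup_nonneg fun _ => abs_nonneg _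
  rw [Real.dist_eq, sub_zero, abs_of_nonneg hge]
  linarith

lemma SS_meas (t : ℝ) (k n : ℕ) (F : Finset (ElemCube d)) :
    MeasurableSet {ω : Config d | SS ω t k n = F} := by
  have : {ω : Config d | SS ω t k n = F} = ⋂ Q : ElemCube d, {ω | Q ∈ SS ω t k n ↔ Q ∈ F} := by
    ext ω
    simp [Finset.ext_iff]
  rw [this]
  refine MeasurableSet.iInter fun Q => ?_
  have hm : MeasurableSet {ω : Config d | Q ∈ SS ω t k n} := by
    by_cases h : Q ∈ CC d k n
    · simpa [mem_SS, h] using pres_meas t Q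
    · simp [mem_SS, h]
  by_cases h : Q ∈ F
  · simpa [h] using hm
  · have : {ω : Config d | Q ∈ SS ω t k n ↔ Q ∈ F} = {ω : Config d | Q ∈ SS ω t k n}ᶜ := by
      ext ω
      simp only [Set.mem_ofPred_eq, Set.mem_compl_iff, h, iff_false]
    rw [this]
    exact hm.compl

lemma SS_fun_meas (t : ℝ) (k n : ℕ) (f : Finset (ElemCube d) → ℝ) :
    Measurable fun ω : Config d => f (SS ω t k n) := by
  letI : MeasurableSpace (Finset (ElemCube d)) := ⊤
  have h1 : Measurable fun ω : Config d => SS ω t k n :=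
    measurable_to_countable' fun F => SS_meas t k n F
  exact (measurable_from_top (f := f)).comp h1

lemma bettiN_meas (q n : ℕ) (t : ℝ) : Measurable fun ω : Config d => (bettiN d q n t ω : ℝ) := by
  simp_rw [bettiN_formula]
  have h1 := SS_fun_meas (d := d) t q n fun F => (F.card : ℝ)
  have h2 := SS_fun_meas (d := d) t q n fun F => (rk (F : Set (ElemCube d)) : ℝ)
  have h3 := SS_fun_meas (d := d) t (q + 1) n fun F => (rk (F : Set (ElemCube d)) : ℝ)
  exact (h1.sub h2).sub h3

/-- density of present cubes -/
def AA (P : Measure (Config d)) (k : ℕ) (t : ℝ) : ℝ :=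
  ∑ b ∈ tys d k, P.real {ω : Config d | Pres ω t (mkc 0 b)}

lemma card_conv {P : Measure (Config d)} [IsProbabilityMeasure P]
    (hstat : Stationary P) (herg : ErgodicConfig P) (t : ℝ) (k : ℕ) :
    ∀ᵐ ω ∂P, Tendsto (fun n : ℕ => ((2 * (n : ℝ)) ^ d)⁻¹ *
      ((SS ω t k n).card : ℝ)) atTop (𝓝 (AA P k t)) := by
  classical
  have h := conv hstat herg (fun Q => {ω : Config d | Pres ω t Q}.indicator (fun _ => (1 : ℝ)))
    (fun Q => measurable_const.indicator (pres_meas t Q))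
    (fun Q ω => by
      by_cases h : ω ∈ {ω : Config d | Pres ω t Q}
      · rw [Set.indicator_of_mem h]; simp
      · rw [Set.indicator_of_notMem h]; simp)
    (fun x Q ω => by
      simp only [Set.indicator_apply, Set.mem_ofPred_eq, pres_tr_iff]) k
  have e : ∑ b ∈ tys d k, ∫ ω, {ω : Config d | Pres ω t (mkc 0 b)}.indicator
      (fun _ => (1 : ℝ)) ω ∂P = AA P k t := by
    refine Finset.sum_congr rfl fun b _ => ?_
    rw [integral_indicator (pres_meas t _)]
    simp
  rw [e] at h
  filter_upwards [h] with ω hω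
  refine hω.congr fun n => ?_
  congr 1
  simp only [Set.indicator_apply, Set.mem_ofPred_eq]
  rw [Finset.sum_boole]
  congr 2

lemma betti_conv {P : Measure (Config d)} [IsProbabilityMeasure P]
    (hstat : Stationary P) (herg : ErgodicConfig P) (t : ℝ) (q : ℕ) :
    ∀ᵐ ω ∂P, Tendsto (fun n : ℕ => ((2 * (n : ℝ)) ^ d)⁻¹ *
      (bettiN d q n t ω : ℝ)) atTop (𝓝 (betaHat d q P t)) := by
  obtain ⟨g1, hg1⟩ := rk_conv hstat herg t q
  obtain ⟨g2, hg2⟩ := rk_conv hstat herg t (q + 1)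
  have h : ∀ᵐ ω ∂P, Tendsto (fun n : ℕ => ((2 * (n : ℝ)) ^ d)⁻¹ *
      (bettiN d q n t ω : ℝ)) atTop (𝓝 (AA P q t - g1 - g2)) := by
    filter_upwards [card_conv hstat herg t q, hg1, hg2] with ω h0 h1 h2
    refine ((h0.sub h1).sub h2).congr fun n => ?_
    rw [bettiN_formula]
    ring
  have hE : Tendsto (fun n : ℕ => ∫ ω, ((2 * (n : ℝ)) ^ d)⁻¹ * (bettiN d q n t ω : ℝ) ∂P) atTop
      (𝓝 (∫ _, (AA P q t - g1 - g2) ∂P)) := by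
    refine tendsto_integral_filter_of_dominated_convergence (fun _ => (tys d q).card * 2)
      (Eventually.of_forall fun n => ((bettiN_meas q n t).const_mul _).aestronglyMeasurable)
      ?_ (integrable_const _) h
    filter_upwards [(tendsto_order.1 (ratio_lim d 1)).2 2 one_lt_two] with n hn
    refine Eventually.of_forall fun ω => ?_
    rw [Real.norm_of_nonneg (by positivity)]
    have a1 : (bettiN d q n t ω : ℝ) ≤ (CC d q n).card := by
      rw [bettiN_formula]
      have : (SS ω t q n).card ≤ (CC d q n).card :=
        Finset.card_le_card fun Q h => (mem_SS.1 h).1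
      have : ((SS ω t q n).card : ℝ) ≤ (CC d q n).card := by exact_mod_cast this
      have e1 : (0 : ℝ) ≤ rk (SS ω t q n : Set (ElemCube d)) := by positivity
      have e2 : (0 : ℝ) ≤ rk (SS ω t (q + 1) n : Set (ElemCube d)) := by positivity
      linarith
    have a2 : ((CC d q n).card : ℝ) ≤ (C0 d q (n + 1)).card := by
      exact_mod_cast Finset.card_le_card (CC_subset_C0 (d := d) q n)
    rw [card_C0] at a2
    calc ((2 * (n : ℝ)) ^ d)⁻¹ * (bettiN d q n t ω : ℝ)
        ≤ ((2 * (n : ℝ)) ^ d)⁻¹ * ((tys d q).card * (2 * ((n + 1 : ℕ) : ℝ)) ^ d) :=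
          mul_le_mul_of_nonneg_left (a1.trans a2) (by positivity)
      _ = (tys d q).card * (((2 * (n : ℝ)) ^ d)⁻¹ * (2 * ((n + 1 : ℕ) : ℝ)) ^ d) := by ring
      _ ≤ _ := mul_le_mul_of_nonneg_left hn.le (by positivity)
  have hb : betaHat d q P t = AA P q t - g1 - g2 := by
    rw [betaHat]
    refine Tendsto.limsup_eq ?_
    simpa [integral_const_mul] using hE
  rw [hb]
  exact h

lemma pres_mono {ω : Config d} {s t : ℝ} (h : s ≤ t) {Q : ElemCube d} (hp : Pres ω s Q) :
    Pres ω t Q := by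
  rw [pres_iff] at hp ⊢
  obtain ⟨Q', h1, h2⟩ := hp
  exact ⟨Q', h1, h2.trans h⟩

lemma SS_mono (ω : Config d) {s t : ℝ} (h : s ≤ t) (k n : ℕ) : SS ω s k n ⊆ SS ω t k n := by
  intro Q hQ
  rw [mem_SS] at hQ ⊢
  exact ⟨hQ.1, pres_mono h hQ.2⟩

lemma betti_inc (ω : Config d) {s t : ℝ} (h : s ≤ t) (q n : ℕ) :
    |(bettiN d q n t ω : ℝ) - bettiN d q n s ω| ≤
      (((SS ω t q n).card : ℝ) + (SS ω t (q + 1) n).card) -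
      (((SS ω s q n).card : ℝ) + (SS ω s (q + 1) n).card) := by
  rw [bettiN_formula, bettiN_formula]
  have a1 := rk_lip (SS_mono ω h q n)
  have a2 := rk_lip (SS_mono ω h (q + 1) n)
  have b1 : (rk (SS ω s q n : Set (ElemCube d)) : ℝ) ≤ rk (SS ω t q n : Set (ElemCube d)) := by
    exact_mod_cast rk_mono (SS_mono ω h q n)
  have b2 : (rk (SS ω s (q + 1) n : Set (ElemCube d)) : ℝ) ≤
      rk (SS ω t (q + 1) n : Set (ElemCube d)) := by
    exact_mod_cast rk_mono (SS_mono ω h (q + 1) n)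
  rw [abs_le]
  constructor <;> linarith

/-- dominating function -/
def PS (P : Measure (Config d)) (Q : ElemCube d) (t : ℝ) : ℝ :=
  ∑ Q' ∈ (finite_cofaces Q).toFinset, (P {ω : Config d | (ω Q' : ℝ) ≤ t}).toReal

lemma PS_bd (P : Measure (Config d)) [IsProbabilityMeasure P] (Q : ElemCube d) {s t : ℝ}
    (h : s ≤ t) : P.real {ω : Config d | Pres ω t Q} - P.real {ω : Config d | Pres ω s Q} ≤
      PS P Q t - PS P Q s := by
  have hm : ∀ (Q' : ElemCube d) (t : ℝ), MeasurableSet {ω : Config d | (ω Q' : ℝ) ≤ t} :=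
    fun Q' t => measurableSet_le
      (measurable_subtype_coe.comp (measurable_pi_apply Q')) measurable_const
  have hsub : {ω : Config d | Pres ω s Q} ⊆ {ω : Config d | Pres ω t Q} :=
    fun ω hω => pres_mono h hω
  rw [← measureReal_sdiff hsub (pres_meas s Q), PS, PS,
    ← Finset.sum_sub_distrib]
  have e : ∀ Q' : ElemCube d, (P {ω : Config d | (ω Q' : ℝ) ≤ t}).toReal -
      (P {ω : Config d | (ω Q' : ℝ) ≤ s}).toReal =
      P.real ({ω : Config d | (ω Q' : ℝ) ≤ t} \ {ω : Config d | (ω Q' : ℝ) ≤ s}) := by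
    intro Q'
    have hs2 : {ω : Config d | (ω Q' : ℝ) ≤ s} ⊆ {ω : Config d | (ω Q' : ℝ) ≤ t} :=
      fun ω hω => le_trans hω h
    rw [measureReal_sdiff hs2 (hm Q' s)]
    rfl
  simp_rw [e]
  refine le_trans (measureReal_mono ?_ (measure_ne_top _ _))
    (measureReal_biUnion_finset_le (finite_cofaces Q).toFinset _)
  rintro ω ⟨h1, h2⟩
  simp only [Set.mem_ofPred_eq, pres_iff, not_exists, not_and] at h1 h2
  obtain ⟨Q', h3, h4⟩ := h1
  simp only [Set.mem_iUnion, exists_prop]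
  exact ⟨Q', by simpa using h3, h4, h2 Q' h3⟩

end Fin1

/-- **uniform LLN for Betti numbers.** Fix `0 ≤ q < d` and let `P` be a
stationary and ergodic probability measure on `Ω = [0,1]^{K^d}` whose marginal distribution
functions `F^Q(t) = P(ω_Q ≤ t)` are continuous on `[0,1]` for every elementary cube `Q`.
Then, `P`-almost surely,
`sup_{t ∈ [0,1]} | |Λ_n|⁻¹ β_q^n(t) - β̂_q(t) | → 0` as `n → ∞`, where
`β̂_q(t) = limsup_{n→∞} |Λ_n|⁻¹ E[β_q^n(t)]`. -/
theorem uniform_lln_betti (d q : ℕ) (hq : q < d)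
    (P : Measure (Config d)) [IsProbabilityMeasure P]
    (hstat : Stationary P) (herg : ErgodicConfig P)
    (hcont : ∀ Q : ElemCube d,
      ContinuousOn (fun t : ℝ => (P {ω : Config d | (ω Q : ℝ) ≤ t}).toReal)
        (Set.Icc (0 : ℝ) 1)) :
    ∀ᵐ ω ∂P,
      Tendsto
        (fun n : ℕ => ⨆ t : Set.Icc (0 : ℝ) 1,
          |((2 * (n : ℝ)) ^ d)⁻¹ * (bettiN d q n (t : ℝ) ω : ℝ) - betaHat d q P (t : ℝ)|)
        atTop (𝓝 0) := by
  have hB := fun t => betti_conv hstat herg t q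
  have hD : ∀ t : ℝ, ∀ᵐ ω ∂P, Tendsto (fun n : ℕ => ((2 * (n : ℝ)) ^ d)⁻¹ *
      (((SS ω t q n).card : ℝ) + (SS ω t (q + 1) n).card)) atTop
      (𝓝 (AA P q t + AA P (q + 1) t)) := by
    intro t
    filter_upwards [card_conv hstat herg t q, card_conv hstat herg t (q + 1)] with ω h1 h2
    simpa only [mul_add] using h1.add h2
  have hinc : ∀ (ω : Config d) (n : ℕ) (s t : ℝ), s ≤ t →
      |((2 * (n : ℝ)) ^ d)⁻¹ * (bettiN d q n t ω : ℝ) -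
        ((2 * (n : ℝ)) ^ d)⁻¹ * (bettiN d q n s ω : ℝ)| ≤
      ((2 * (n : ℝ)) ^ d)⁻¹ * (((SS ω t q n).card : ℝ) + (SS ω t (q + 1) n).card) -
      ((2 * (n : ℝ)) ^ d)⁻¹ * (((SS ω s q n).card : ℝ) + (SS ω s (q + 1) n).card) := by
    intro ω n s t h
    rw [← mul_sub, ← mul_sub, abs_mul, abs_of_nonneg (by positivity : 0 ≤ ((2 * (n : ℝ)) ^ d)⁻¹)]
    exact mul_le_mul_of_nonneg_left (betti_inc ω h q n) (by positivity)
  have hbinc : ∀ s t : ℝ, s ≤ t → |betaHat d q P t - betaHat d q P s| ≤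
      (AA P q t + AA P (q + 1) t) - (AA P q s + AA P (q + 1) s) := by
    intro s t h
    obtain ⟨ω, ⟨h1, h2⟩, h3, h4⟩ := (((hB s).and (hB t)).and ((hD s).and (hD t))).exists
    exact le_of_tendsto_of_tendsto' (h2.sub h1).abs (h4.sub h3) fun n => hinc ω n s t h
  filter_upwards [ae_all_iff.2 fun r : ℚ => hB r, ae_all_iff.2 fun r : ℚ => hD r] with ω h1 h2
  refine unif_grid (fun n t => ((2 * (n : ℝ)) ^ d)⁻¹ * (bettiN d q n t ω : ℝ))
    (fun n t => ((2 * (n : ℝ)) ^ d)⁻¹ *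
      (((SS ω t q n).card : ℝ) + (SS ω t (q + 1) n).card)) (betaHat d q P)
    (fun t => AA P q t + AA P (q + 1) t)
    (fun t => ∑ b ∈ tys d q, PS P (mkc 0 b) t + ∑ b ∈ tys d (q + 1), PS P (mkc 0 b) t)
    (hinc ω) hbinc ?_ ?_ h1 h2
  · refine ContinuousOn.add ?_ ?_ <;>
      exact continuousOn_finset_sum _ fun b _ => continuousOn_finset_sum _ fun Q' _ => hcont Q'
  · intro s t h
    have key : ∀ k, AA P k t - AA P k s ≤
        ∑ b ∈ tys d k, PS P (mkc 0 b) t - ∑ b ∈ tys d k, PS P (mkc 0 b) s := by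
      intro k
      rw [AA, AA, ← Finset.sum_sub_distrib, ← Finset.sum_sub_distrib]
      exact Finset.sum_le_sum fun b _ => PS_bd P _ h
    have := key q
    have := key (q + 1)
    linarith

end
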